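/- Let G be a finite pseudo-solvable group and Γ̄ the complement of its prime graph. For a prime r dividing |G| with r ∉ {2,3,5}, define its pattern as the triple of truth values (r Γ̄-adjacent to 3, r Γ̄-adjacent to 5, r Γ̄-adjacent to 2). Then exactly one of the following holds: (1) Γ̄ is 3-colorable and triangle-free; (2) Γ̄ is 3-colorable, 2, 3, 5 divide |G|, G has no elements of orders 6, 10, 15, and every prime r ∉ {2,3,5} dividing |G| is Γ̄-non-adjacent to 2 and to 3 (i.e., the only possible Γ̄-edge from r to {2,3,5} is 5–r); (3) Γ̄ is 3-colorable, there is a prime p ∉ {2,3,5} dividing |G| with 3, 5 dividing |G| and G having no elements of orders 3p, 5p, 15, and every prime r ∉ {2,3,5} dividing |G| has pattern in {(0,0,0),(1,1,1),(0,1,0),(0,1,1),(0,0,1)}; (4) Γ̄ is 3-colorable, there is a prime p ∉ {2,3,5} dividing |G| with 3, 5 dividing |G| and G having no elements of orders 3p, 5p, 15, and every prime r ∉ {2,3,5} dividing |G| has pattern in {(0,0,0),(0,1,0),(1,1,0)}. -/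

import Mathlib

/-- A finite group is *pseudo-solvable* if it has a subnormal series whose factors are
all cyclic or isomorphic to the alternating group `A₅`. -/
def IsPseudoSolvable (G : Type*) [Group G] : Prop :=
  ∃ (n : ℕ) (H : Fin (n + 1) → Subgroup G),
    H 0 = ⊥ ∧ H (Fin.last n) = ⊤ ∧
    ∀ i : Fin n, H i.castSucc ≤ H i.succ ∧
      ∃ hN : ((H i.castSucc).subgroupOf (H i.succ)).Normal,
        haveI := hN
        IsCyclic (H i.succ ⧸ (H i.castSucc).subgroupOf (H i.succ)) ∨
        Nonempty ((H i.succ ⧸ (H i.castSucc).subgroupOf (H i.succ)) ≃* alternatingGroup (Fin 5))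

/-- `a` and `b` are adjacent in the complement of the prime graph of `G`: they are
distinct primes dividing `|G|` and `G` has no element of order `ab`. -/
def CompAdj (G : Type*) [Group G] (a b : ℕ) : Prop :=
  a.Prime ∧ b.Prime ∧ a ≠ b ∧ a ∣ Nat.card G ∧ b ∣ Nat.card G ∧
    ¬ ∃ g : G, orderOf g = a * b

/-- The complement of the prime graph of `G` is 3-colorable. -/
def CompColorable3 (G : Type*) [Group G] : Prop :=
  ∃ c : ℕ → Fin 3, ∀ a b : ℕ, CompAdj G a b → c a ≠ c b

/-- Category (1): the complement is 3-colorable and triangle-free. -/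
def Cat1 (G : Type*) [Group G] : Prop :=
  CompColorable3 G ∧
    ¬ ∃ a b c : ℕ, CompAdj G a b ∧ CompAdj G a c ∧ CompAdj G b c

/-- Category (2): the complement is 3-colorable, `{2,3,5}` is a triangle, and every
other prime `r` is non-adjacent to `2` and `3` in the complement. -/
def Cat2 (G : Type*) [Group G] : Prop :=
  CompColorable3 G ∧
    2 ∣ Nat.card G ∧ 3 ∣ Nat.card G ∧ 5 ∣ Nat.card G ∧
    (¬ ∃ g : G, orderOf g = 6) ∧ (¬ ∃ g : G, orderOf g = 10) ∧
    (¬ ∃ g : G, orderOf g = 15) ∧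
    ∀ r : ℕ, r.Prime → r ∣ Nat.card G → r ∉ ({2, 3, 5} : Set ℕ) →
      ¬ CompAdj G r 2 ∧ ¬ CompAdj G r 3

/-- Category (3): the complement is 3-colorable, `{p,3,5}` is a triangle for some
prime `p ∉ {2,3,5}`, and the adjacency pattern `(r-3, r-5, r-2)` of every other
prime `r` belongs to `{(0,0,0),(1,1,1),(0,1,0),(0,1,1),(0,0,1)}` (Figure 2). -/
def Cat3 (G : Type*) [Group G] : Prop :=
  CompColorable3 G ∧
    (∃ p : ℕ, p.Prime ∧ p ∉ ({2, 3, 5} : Set ℕ) ∧ p ∣ Nat.card G ∧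
      3 ∣ Nat.card G ∧ 5 ∣ Nat.card G ∧
      (¬ ∃ g : G, orderOf g = 3 * p) ∧ (¬ ∃ g : G, orderOf g = 5 * p) ∧
      (¬ ∃ g : G, orderOf g = 15)) ∧
    ∀ r : ℕ, r.Prime → r ∣ Nat.card G → r ∉ ({2, 3, 5} : Set ℕ) →
      ((¬ CompAdj G r 3 ∧ ¬ CompAdj G r 5 ∧ ¬ CompAdj G r 2) ∨
       (CompAdj G r 3 ∧ CompAdj G r 5 ∧ CompAdj G r 2) ∨
       (¬ CompAdj G r 3 ∧ CompAdj G r 5 ∧ ¬ CompAdj G r 2) ∨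
       (¬ CompAdj G r 3 ∧ CompAdj G r 5 ∧ CompAdj G r 2) ∨
       (¬ CompAdj G r 3 ∧ ¬ CompAdj G r 5 ∧ CompAdj G r 2))

/-- Category (4): the complement is 3-colorable, `{p,3,5}` is a triangle for some
prime `p ∉ {2,3,5}`, and the adjacency pattern `(r-3, r-5, r-2)` of every other
prime `r` belongs to `{(0,0,0),(0,1,0),(1,1,0)}` (Figure 3). -/
def Cat4 (G : Type*) [Group G] : Prop :=
  CompColorable3 G ∧
    (∃ p : ℕ, p.Prime ∧ p ∉ ({2, 3, 5} : Set ℕ) ∧ p ∣ Nat.card G ∧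
      3 ∣ Nat.card G ∧ 5 ∣ Nat.card G ∧
      (¬ ∃ g : G, orderOf g = 3 * p) ∧ (¬ ∃ g : G, orderOf g = 5 * p) ∧
      (¬ ∃ g : G, orderOf g = 15)) ∧
    ∀ r : ℕ, r.Prime → r ∣ Nat.card G → r ∉ ({2, 3, 5} : Set ℕ) →
      ((¬ CompAdj G r 3 ∧ ¬ CompAdj G r 5 ∧ ¬ CompAdj G r 2) ∨
       (¬ CompAdj G r 3 ∧ CompAdj G r 5 ∧ ¬ CompAdj G r 2) ∨
       (CompAdj G r 3 ∧ CompAdj G r 5 ∧ ¬ CompAdj G r 2))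

/-! Questions about two or three primes reduce to a quotient of `G` with a minimal normal subgroup
whose order is divisible by one of them. This subgroup is either an elementary abelian `p`-group
`V` or a product of copies of `A₅`. In the first case, if `p` and `q` are `Γ̄`-adjacent, elements of
order `q` act on `V` without fixed points, so the `q`-rank of `G` is at most one. In the second,
an element of prime order `r ∉ {2, 3, 5}` either centralizes a factor `A₅` or permutes the factors,
so `r` is not `Γ̄`-adjacent to 2, 3 or 5.

Consequently no two primes of `p`-rank at least two are `Γ̄`-adjacent, and these primes form one
colour class; the primes of `p`-rank one not dividing `|G'|`, together with 3 if `G` is not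
solvable, form a second one, and all others the third. Similarly, a triangle in `Γ̄` can occur only
if `G` is not solvable, and it then contains 3 and 5.

For nonsolvable `G` let `r ∉ {2, 3, 5}`. Suppose first that `G` has no element of order 6. If `r` is
adjacent to 2, then the 2-rank is one, which already gives an element of order 6. Further, a 2-group
covering a Klein four-group of `A₅` is acted on without fixed points by an element of order 3; were
`r` adjacent to 3, this would force the 2-group into the solvable radical. In the other triangles,
suppose that `r` is adjacent to 3, and let `V` be a minimal normal `r`-subgroup of a quotient.
Elements `x` of order 3 satisfy `1 + x + x² = 0` on `V`, and two of them generate a group covering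
`A₅`, so a fixed vector of an element of order 5 produces one of an element of order 3; hence `r` is
adjacent to 5. If moreover the 2-rank is one, an involution commuting with an element of order `r`
may be taken central by Frattini's argument, and modulo this involution the Klein four-group applies
again; hence `r` is adjacent to 2. -/

universe u

section ElementOrders

variable {G H : Type*} [Group G] [Group H]

/-- `G` has an element of order `n`. For distinct primes `p` and `q` dividing `|G|`,
`HasOrder G (p * q)` is adjacency of `p` and `q` in the prime graph of `G`. -/
def HasOrder (G : Type*) [Group G] (n : ℕ) : Prop := ∃ g : G, orderOf g = n

lemma HasOrder.of_dvd_orderOf [Finite G] {g : G} {n : ℕ} (h : n ∣ orderOf g) : HasOrder G n :=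
  ⟨g ^ (orderOf g / n), orderOf_pow_orderOf_div (orderOf_pos g).ne' h⟩

lemma HasOrder.of_surjective [Finite G] {f : G →* H} (hf : Function.Surjective f) {n : ℕ}
    (h : HasOrder H n) : HasOrder G n := by
  obtain ⟨y, rfl⟩ := h
  obtain ⟨x, rfl⟩ := hf y
  exact .of_dvd_orderOf (orderOf_map_dvd f x)

lemma HasOrder.of_subgroup {K : Subgroup G} {n : ℕ} (h : HasOrder K n) : HasOrder G n :=
  h.imp' (↑) fun g hg => (Subgroup.orderOf_coe g).trans hg

lemma HasOrder.exists_commute {m n : ℕ} (hm : m ≠ 0) (hn : n ≠ 0) (h : HasOrder G (m * n)) :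
    ∃ a b : G, orderOf a = m ∧ orderOf b = n ∧ Commute a b := by
  obtain ⟨g, hg⟩ := h
  refine ⟨g ^ n, g ^ m, ?_, ?_, Commute.pow_pow_self g n m⟩
  · rw [orderOf_pow_of_dvd hn (hg ▸ dvd_mul_left n m), hg, Nat.mul_div_cancel _ hn.pos]
  · rw [orderOf_pow_of_dvd hm (hg ▸ dvd_mul_right m n), hg, Nat.mul_div_cancel_left _ hm.pos]

lemma HasOrder.of_quotient [Finite G] {N : Subgroup G} [N.Normal] {n : ℕ}
    (h : HasOrder (G ⧸ N) n) : HasOrder G n :=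
  h.of_surjective (QuotientGroup.mk'_surjective N)

lemma HasOrder.of_commute {a b : G} {p q : ℕ} (hp : p.Prime) (hq : q.Prime) (hpq : p ≠ q)
    (ha : orderOf a = p) (hb : orderOf b = q) (hab : Commute a b) : HasOrder G (p * q) := by
  subst ha hb
  exact ⟨a * b, hab.orderOf_mul_eq_mul_orderOf_of_coprime ((Nat.coprime_primes hp hq).2 hpq)⟩

lemma HasOrder.swap {m n : ℕ} (h : HasOrder G (m * n)) : HasOrder G (n * m) := by
  rwa [mul_comm]

lemma exists_orderOf_eq_of_prime_dvd [Finite G] {p : ℕ} (hp : p.Prime) (h : p ∣ Nat.card G) :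
    ∃ g : G, orderOf g = p :=
  have := Fact.mk hp
  exists_prime_orderOf_dvd_card' p h

lemma orderOf_eq_of_prime {g : G} {p : ℕ} (hp : p.Prime) (h : g ^ p = 1) (hg : g ≠ 1) :
    orderOf g = p :=
  have := Fact.mk hp
  orderOf_eq_prime h hg

lemma ne_one_of_orderOf_prime {g : G} {p : ℕ} (hp : p.Prime) (h : orderOf g = p) : g ≠ 1 := by
  rintro rfl
  exact hp.ne_one (h.symm.trans orderOf_one)

lemma dvd_natCard_of_mem {N : Subgroup G} {n : ℕ} {g : G} (hg : g ∈ N) (h : orderOf g = n) :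
    n ∣ Nat.card N :=
  h ▸ N.orderOf_dvd_natCard hg

lemma eq_one_of_mem_of_not_dvd {N : Subgroup G} {p : ℕ} (hp : p.Prime)
    (hN : ¬ p ∣ Nat.card N) {g : G} (hg : g ∈ N) (h : g ^ p = 1) : g = 1 := by
  by_contra hne
  exact hN (dvd_natCard_of_mem hg (orderOf_eq_of_prime hp h hne))

lemma orderOf_map_of_prime {g : G} {p : ℕ} (hp : p.Prime) (h : orderOf g = p) {f : G →* H}
    (hfg : f g ≠ 1) : orderOf (f g) = p :=
  orderOf_eq_of_prime hp (by rw [← map_pow, ← h, pow_orderOf_eq_one, map_one]) hfg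

lemma exists_orderOf_pow_eq_prime_pow [Finite G] (g : G) {p : ℕ} (hp : p.Prime) :
    ∃ m k : ℕ, m ≡ 1 [MOD p] ∧ orderOf (g ^ m) = p ^ k := by
  obtain ⟨a, n, hn, hgn⟩ :=
    Nat.exists_eq_pow_mul_and_not_dvd (orderOf_pos g).ne' p hp.ne_one
  obtain ⟨m, hm, hmp⟩ := Nat.chineseRemainder ((hp.coprime_iff_not_dvd).2 hn).symm 0 1
  obtain ⟨c, rfl⟩ := Nat.modEq_zero_iff_dvd.1 hm
  have hpow : (g ^ (n * c)) ^ p ^ a = 1 := by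
    rw [← pow_mul, show n * c * p ^ a = p ^ a * n * c by ring, ← hgn, pow_mul,
      pow_orderOf_eq_one, one_pow]
  obtain ⟨k, -, hk⟩ := (Nat.dvd_prime_pow hp).1 (orderOf_dvd_of_pow_eq_one hpow)
  exact ⟨_, k, hmp, hk⟩

lemma map_pow_eq_of_modEq {f : G →* H} {g : G} {m n : ℕ} (hg : orderOf (f g) = n)
    (hm : m ≡ 1 [MOD n]) : f (g ^ m) = f g := by
  rw [map_pow, ← hg] at *
  simpa using pow_eq_pow_iff_modEq.2 hm

lemma exists_pow_orderOf_eq_and_map_eq [Finite G] {f : G →* H} {g : G} {q : ℕ} (hq : q.Prime)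
    (hg : orderOf (f g) = q) (hker : ¬ q ∣ Nat.card f.ker) :
    ∃ m : ℕ, orderOf (g ^ m) = q ∧ f (g ^ m) = f g := by
  obtain ⟨m, k, hm, hk⟩ := exists_orderOf_pow_eq_prime_pow g hq
  have hfm : f (g ^ m) = f g := map_pow_eq_of_modEq hg hm
  have hne : g ^ m ≠ 1 := fun h =>
    ne_one_of_orderOf_prime hq hg (by rw [← hfm, h, map_one])
  have hmem : (g ^ m) ^ q ∈ f.ker := by
    rw [MonoidHom.mem_ker, map_pow, hfm, ← hg, pow_orderOf_eq_one]
  have hcop : (orderOf ((g ^ m) ^ q)).Coprime (Nat.card f.ker) :=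
    .coprime_dvd_left ((orderOf_pow_dvd q).trans hk.dvd)
      (.pow_left k ((hq.coprime_iff_not_dvd).2 hker))
  have hpow : (g ^ m) ^ q = 1 :=
    orderOf_eq_one_iff.1 (Nat.eq_one_of_dvd_coprimes hcop dvd_rfl (f.ker.orderOf_dvd_natCard hmem))
  exact ⟨m, orderOf_eq_of_prime hq hpow hne, hfm⟩

lemma exists_orderOf_eq_and_map_eq [Finite G] {f : G →* H} (hf : Function.Surjective f) {y : H}
    {q : ℕ} (hq : q.Prime) (hy : orderOf y = q) (hker : ¬ q ∣ Nat.card f.ker) :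
    ∃ g : G, orderOf g = q ∧ f g = y := by
  obtain ⟨g, rfl⟩ := hf y
  obtain ⟨m, hm⟩ := exists_pow_orderOf_eq_and_map_eq hq hy hker
  exact ⟨g ^ m, hm⟩

end ElementOrders

section PRank

variable {G H : Type*} [Group G] [Group H] {p : ℕ}

/-- The `p`-rank of `G` is at most one: `G` contains no elementary abelian subgroup of order
`p ^ 2`. -/
def PRankLEOne (p : ℕ) (G : Type*) [Group G] : Prop :=
  ∀ a b : G, orderOf a = p → orderOf b = p → Commute a b → b ∈ Subgroup.zpowers a

lemma PRankLEOne.of_hom (hp : p.Prime) (f : G →* H)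
    (hf : ∀ g, f g = 1 → g ^ p = 1 → g = 1) (h : PRankLEOne p H) : PRankLEOne p G := by
  intro a b ha hb hab
  have hap : a ^ p = 1 := ha ▸ pow_orderOf_eq_one a
  have hbp : b ^ p = 1 := hb ▸ pow_orderOf_eq_one b
  have hfa := orderOf_map_of_prime hp ha fun h => ne_one_of_orderOf_prime hp ha (hf a h hap)
  have hfb := orderOf_map_of_prime hp hb fun h => ne_one_of_orderOf_prime hp hb (hf b h hbp)
  obtain ⟨k, hk⟩ := Subgroup.mem_zpowers_iff.1 (h _ _ hfa hfb (hab.map f))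
  have hcomm : Commute b (a ^ k)⁻¹ := (hab.symm.zpow_right k).inv_right
  have hone : b * (a ^ k)⁻¹ = 1 := by
    refine hf _ ?_ ?_
    · rw [map_mul, map_inv, map_zpow, hk, mul_inv_cancel]
    · rw [hcomm.mul_pow, hbp, one_mul, inv_pow, ← zpow_natCast, zpow_comm, zpow_natCast, hap,
        one_zpow, inv_one]
  exact Subgroup.mem_zpowers_iff.2 ⟨k, (mul_inv_eq_one.1 hone).symm⟩

lemma PRankLEOne.of_injective (hp : p.Prime) {f : G →* H} (hf : Function.Injective f)
    (h : PRankLEOne p H) : PRankLEOne p G :=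
  h.of_hom hp f fun _ hg _ => hf (hg.trans (map_one f).symm)

lemma PRankLEOne.subgroup (hp : p.Prime) (h : PRankLEOne p G) (K : Subgroup G) :
    PRankLEOne p K :=
  h.of_injective hp K.subtype_injective

lemma PRankLEOne.of_quotient (hp : p.Prime) {N : Subgroup G} [N.Normal]
    (hN : ¬ p ∣ Nat.card N) (h : PRankLEOne p (G ⧸ N)) : PRankLEOne p G :=
  h.of_hom hp (QuotientGroup.mk' N) fun g hg =>
    eq_one_of_mem_of_not_dvd hp hN ((QuotientGroup.eq_one_iff g).1 hg)

lemma isPGroup_zpowers_sup_zpowers {a b : G} (hab : Commute a b) (ha : a ^ p = 1)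
    (hb : b ^ p = 1) : IsPGroup p ↥(Subgroup.zpowers a ⊔ Subgroup.zpowers b) := by
  have isPGroup_zpowers : ∀ {g : G}, g ^ p = 1 → IsPGroup p (Subgroup.zpowers g) := by
    rintro g hg ⟨_, k, rfl⟩
    have hgk : (g ^ k) ^ p = 1 := by
      rw [← zpow_natCast, zpow_comm, zpow_natCast, hg, one_zpow]
    exact ⟨1, Subtype.ext (by simpa using hgk)⟩
  refine (isPGroup_zpowers ha).to_sup_of_normal_right' (isPGroup_zpowers hb) ?_
  refine le_trans ?_ (Subgroup.centralizer_le_normalizer _)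
  rw [Subgroup.zpowers_le, Subgroup.mem_centralizer_iff]
  rintro _ ⟨k, rfl⟩
  exact (hab.zpow_right k).symm

lemma PRankLEOne.of_sq_not_dvd [Finite G] (hp : p.Prime) (h : ¬ p ^ 2 ∣ Nat.card G) :
    PRankLEOne p G := by
  intro a b ha hb hab
  let K := Subgroup.zpowers a ⊔ Subgroup.zpowers b
  have := Fact.mk hp
  obtain ⟨k, hk⟩ := IsPGroup.iff_card.1 <|
    isPGroup_zpowers_sup_zpowers hab (ha ▸ pow_orderOf_eq_one a) (hb ▸ pow_orderOf_eq_one b)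
  have hk1 : k ≤ 1 := by
    by_contra! h2
    exact h ((pow_dvd_pow p h2).trans (hk ▸ K.card_subgroup_dvd_card))
  have hcard : Nat.card K ≤ Nat.card (Subgroup.zpowers a) := by
    rw [hk, Nat.card_zpowers, ha]
    simpa using Nat.pow_le_pow_right hp.pos hk1
  rw [Subgroup.eq_of_le_of_card_ge le_sup_left hcard]
  exact Subgroup.mem_sup_right (Subgroup.mem_zpowers b)

end PRank

/-- The alternating group on five letters. -/
abbrev A5 := alternatingGroup (Fin 5)

instance : IsSimpleGroup A5 := alternatingGroup.isSimpleGroup (by simp)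

lemma natCard_A5 : Nat.card A5 = 60 := by
  rw [nat_card_alternatingGroup, Nat.card_eq_fintype_card, Fintype.card_fin]
  decide

lemma not_isSolvable_A5 : ¬ Group.IsSolvable A5 := by
  intro h
  have hcomm := (IsSimpleGroup.comm_iff_isSolvable (G := A5)).2 h
    ⟨Equiv.swap 0 1 * Equiv.swap 1 2, by rw [Equiv.Perm.mem_alternatingGroup]; decide⟩
    ⟨Equiv.swap 0 1 * Equiv.swap 1 3, by rw [Equiv.Perm.mem_alternatingGroup]; decide⟩
  exact absurd (congrArg Subtype.val hcomm) (by decide)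

lemma not_isSolvable_of_mulEquiv_A5 {G : Type*} [Group G] (e : G ≃* A5) : ¬ Group.IsSolvable G :=
  fun _ => not_isSolvable_A5 (Group.isSolvable_of_surjective (f := e.toMonoidHom) e.surjective)

section PseudoSolvable

/-- Pseudo-solvability generated by extensions: a form of `IsPseudoSolvable` suited to
induction on the group. -/
inductive PseudoSolvable : (G : Type u) → [Group G] → Prop
  | of_isSolvable {G : Type u} [Group G] (h : Group.IsSolvable G) : PseudoSolvable G
  | of_mulEquiv_A5 {G : Type u} [Group G] (e : G ≃* A5) : PseudoSolvable G
  | of_extension {G : Type u} [Group G] {N : Subgroup G} [N.Normal] (hN : PseudoSolvable N)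
      (hQ : PseudoSolvable (G ⧸ N)) : PseudoSolvable G

variable {G H : Type u} [Group G] [Group H]

lemma PseudoSolvable.of_injective (hG : PseudoSolvable G) {f : H →* G}
    (hf : Function.Injective f) (hrange : f.range.Normal) : PseudoSolvable H := by
  induction hG generalizing H with
  | of_isSolvable h => exact .of_isSolvable (Group.isSolvable_of_isSolvable_injective hf)
  | of_mulEquiv_A5 e =>
    have := e.isSimpleGroup
    rcases hrange.eq_bot_or_eq_top with h | h
    · have : Subsingleton H := ⟨fun a b => hf <| by
        rw [MonoidHom.range_eq_bot_iff.1 h, MonoidHom.one_apply, MonoidHom.one_apply]⟩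
      exact .of_isSolvable inferInstance
    · exact .of_mulEquiv_A5 ((MulEquiv.ofBijective f ⟨hf, MonoidHom.range_eq_top.1 h⟩).trans e)
  | @of_extension G _ N _ _ _ ihN ihQ =>
    refine .of_extension (N := N.comap f) (ihN (f := f.subgroupComap N) ?_ ⟨?_⟩)
      (ihQ (f := QuotientGroup.map _ _ f le_rfl) ?_ ⟨?_⟩)
    · exact fun a b hab => Subtype.ext (hf (congrArg Subtype.val hab))
    · rintro _ ⟨⟨a, ha⟩, rfl⟩ g
      obtain ⟨b, hb⟩ := hrange.conj_mem (f a) ⟨a, rfl⟩ g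
      refine ⟨⟨b, ?_⟩, Subtype.ext hb⟩
      rw [Subgroup.mem_comap, hb]
      exact (g * ⟨f a, ha⟩ * g⁻¹ : N).2
    · rw [injective_iff_map_eq_one]
      intro a
      induction a using QuotientGroup.induction_on with | H a =>
      intro ha
      rw [QuotientGroup.map_mk, QuotientGroup.eq_one_iff] at ha
      exact (QuotientGroup.eq_one_iff a).2 ha
    · rintro _ ⟨a, rfl⟩ g
      induction a using QuotientGroup.induction_on with | H a =>
      induction g using QuotientGroup.induction_on with | H g =>
      obtain ⟨b, hb⟩ := hrange.conj_mem (f a) ⟨a, rfl⟩ g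
      exact ⟨(b : H ⧸ N.comap f), by rw [QuotientGroup.map_mk, hb]; rfl⟩

lemma PseudoSolvable.of_surjective (hG : PseudoSolvable G) {f : G →* H}
    (hf : Function.Surjective f) : PseudoSolvable H := by
  induction hG generalizing H with
  | of_isSolvable h => exact .of_isSolvable (Group.isSolvable_of_surjective hf)
  | of_mulEquiv_A5 e =>
    have := e.isSimpleGroup
    rcases (inferInstance : f.ker.Normal).eq_bot_or_eq_top with h | h
    · exact .of_mulEquiv_A5
        ((MulEquiv.ofBijective f ⟨(MonoidHom.ker_eq_bot_iff f).1 h, hf⟩).symm.trans e)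
    · have : Subsingleton H := by
        rw [← Subgroup.subsingleton_iff, ← subsingleton_iff_bot_eq_top,
          ← MonoidHom.range_eq_top.2 hf, f.range_eq_map, ← h, Subgroup.map_ker_self]
      exact .of_isSolvable inferInstance
  | @of_extension G _ N hN _ _ ihN ihQ =>
    have := hN.map f hf
    refine .of_extension (N := N.map f) (ihN (f.subgroupMap_surjective N))
      (ihQ (f := QuotientGroup.map N (N.map f) f (Subgroup.le_comap_map f N)) ?_)
    intro a
    induction a using QuotientGroup.induction_on with | H a =>
    obtain ⟨b, rfl⟩ := hf a
    exact ⟨(b : G ⧸ N), rfl⟩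

lemma PseudoSolvable.of_mulEquiv (hG : PseudoSolvable G) (e : G ≃* H) : PseudoSolvable H :=
  hG.of_surjective (f := e.toMonoidHom) e.surjective

lemma PseudoSolvable.subgroup (hG : PseudoSolvable G) (N : Subgroup G) [hN : N.Normal] :
    PseudoSolvable N :=
  hG.of_injective N.subtype_injective (by rwa [N.range_subtype])

lemma PseudoSolvable.quotient (hG : PseudoSolvable G) (N : Subgroup G) [N.Normal] :
    PseudoSolvable (G ⧸ N) :=
  hG.of_surjective (QuotientGroup.mk'_surjective N)

lemma IsPseudoSolvable.pseudoSolvable (hG : IsPseudoSolvable G) : PseudoSolvable G := by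
  obtain ⟨n, H, hbot, htop, hstep⟩ := hG
  have hH : ∀ i : Fin (n + 1), PseudoSolvable (H i) := by
    intro i
    induction i using Fin.induction with
    | zero => rw [hbot]; exact .of_isSolvable inferInstance
    | succ i ih =>
      obtain ⟨hle, hN, hq⟩ := hstep i
      refine .of_extension (ih.of_mulEquiv (Subgroup.subgroupOfEquivOfLe hle).symm) ?_
      rcases hq with hcyclic | ⟨⟨e⟩⟩
      · exact .of_isSolvable (Group.isSolvable_of_comm hcyclic.commGroup.mul_comm)
      · exact .of_mulEquiv_A5 e
  have := hH (Fin.last n)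
  rw [htop] at this
  exact this.of_mulEquiv Subgroup.topEquiv

lemma isSolvable_of_normal_of_quotient (N : Subgroup G) [N.Normal] (hN : Group.IsSolvable N)
    (hQ : Group.IsSolvable (G ⧸ N)) : Group.IsSolvable G :=
  (Group.isSolvable_iff_subgroup_quotient N).2 ⟨hN, hQ⟩

lemma PseudoSolvable.sixty_dvd_natCard (hG : PseudoSolvable G) (hs : ¬ Group.IsSolvable G) :
    60 ∣ Nat.card G := by
  induction hG with
  | of_isSolvable h => exact absurd h hs
  | of_mulEquiv_A5 e => rw [Nat.card_congr e.toEquiv, natCard_A5]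
  | @of_extension G _ N _ _ _ ihN ihQ =>
    by_cases hN : Group.IsSolvable N
    · exact (ihQ fun hQ => hs (isSolvable_of_normal_of_quotient N hN hQ)).trans
        N.card_quotient_dvd_card
    · exact (ihN hN).trans N.card_subgroup_dvd_card

lemma PseudoSolvable.dvd_natCard (hG : PseudoSolvable G) (hs : ¬ Group.IsSolvable G) {p : ℕ}
    (hp : p ∈ ({2, 3, 5} : Set ℕ)) : p ∣ Nat.card G := by
  refine .trans ?_ (hG.sixty_dvd_natCard hs)
  rcases hp with rfl | rfl | rfl <;> norm_num

lemma PseudoSolvable.isSolvable_or_mulEquiv_A5 (hG : PseudoSolvable G) (hs : IsSimpleGroup G) :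
    Group.IsSolvable G ∨ Nonempty (G ≃* A5) := by
  induction hG with
  | of_isSolvable h => exact .inl h
  | of_mulEquiv_A5 e => exact .inr ⟨e⟩
  | @of_extension G _ N hN _ _ ihN ihQ =>
    rcases hN.eq_bot_or_eq_top with rfl | rfl
    · have e : G ⧸ (⊥ : Subgroup G) ≃* G := QuotientGroup.quotientBot
      rcases ihQ e.isSimpleGroup with h | ⟨⟨i⟩⟩
      · exact .inl (Group.isSolvable_of_surjective (f := e.toMonoidHom) e.surjective)
      · exact .inr ⟨e.symm.trans i⟩
    · have e : (⊤ : Subgroup G) ≃* G := Subgroup.topEquiv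
      rcases ihN e.isSimpleGroup with h | ⟨⟨i⟩⟩
      · exact .inl (Group.isSolvable_of_surjective (f := e.toMonoidHom) e.surjective)
      · exact .inr ⟨e.symm.trans i⟩

lemma PseudoSolvable.dvd_natCard_commutator (hG : PseudoSolvable G) (hs : ¬ Group.IsSolvable G)
    {p : ℕ} (hp : p ∈ ({2, 3, 5} : Set ℕ)) : p ∣ Nat.card (commutator G) :=
  (hG.subgroup _).dvd_natCard (fun h => hs <| isSolvable_of_normal_of_quotient _ h
    (inferInstance : Group.IsSolvable (Abelianization G))) hp

end PseudoSolvable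

section SolvableRadical

variable {G : Type*} [Group G]

/-- The solvable radical: the subgroup generated by all solvable normal subgroups. For finite
`G` it is itself solvable, hence the largest solvable normal subgroup. -/
def solvableRadical (G : Type*) [Group G] : Subgroup G :=
  sSup {N : Subgroup G | N.Normal ∧ Group.IsSolvable N}

instance : (solvableRadical G).Normal := Subgroup.sSup_normal _ fun _ hN => hN.1

instance : (solvableRadical G).Characteristic :=
  Subgroup.characteristic_iff_map_le.2 fun φ => by
    rw [solvableRadical, Subgroup.map_le_iff_le_comap]
    refine sSup_le fun N hN => Subgroup.map_le_iff_le_comap.1 (le_sSup ?_)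
    have := hN.2
    refine ⟨hN.1.map _ φ.surjective, ?_⟩
    exact Group.isSolvable_of_surjective (φ.toMonoidHom.subgroupMap_surjective N)

lemma le_solvableRadical {N : Subgroup G} (hN : N.Normal) (hs : Group.IsSolvable N) :
    N ≤ solvableRadical G :=
  le_sSup ⟨hN, hs⟩

lemma isSolvable_of_le {J K : Subgroup G} (h : J ≤ K) [Group.IsSolvable K] :
    Group.IsSolvable J :=
  Group.isSolvable_of_isSolvable_injective (Subgroup.inclusion_injective h)

lemma isSolvable_comap_mk' (N : Subgroup G) [N.Normal] (hN : Group.IsSolvable N)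
    (M : Subgroup (G ⧸ N)) (hM : Group.IsSolvable M) :
    Group.IsSolvable (M.comap (QuotientGroup.mk' N)) := by
  have hle : N ≤ M.comap (QuotientGroup.mk' N) := QuotientGroup.le_comap_mk' N M
  refine Group.isSolvable_of_ker_le_range (Subgroup.inclusion hle)
    ((QuotientGroup.mk' N).subgroupComap M) ?_
  rintro ⟨x, hx⟩ h
  exact ⟨⟨x, (QuotientGroup.eq_one_iff x).1 (congrArg Subtype.val h)⟩, rfl⟩

lemma isSolvable_sup {J K : Subgroup G} [K.Normal] (hJ : Group.IsSolvable J)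
    (hK : Group.IsSolvable K) : Group.IsSolvable ↥(J ⊔ K) := by
  have := isSolvable_comap_mk' K hK (J.map (QuotientGroup.mk' K))
    (Group.isSolvable_of_surjective ((QuotientGroup.mk' K).subgroupMap_surjective J))
  rwa [Subgroup.comap_map_eq, QuotientGroup.ker_mk'] at this

instance [Finite G] : Group.IsSolvable (solvableRadical G) := by
  have hsup : SupClosed {N : Subgroup G | N.Normal ∧ Group.IsSolvable N} :=
    fun J hJ K hK => by
      have := hJ.1
      have := hK.1
      exact ⟨inferInstance, isSolvable_sup hJ.2 hK.2⟩
  exact (hsup.sSup_mem (Set.toFinite _) ⟨inferInstance, inferInstance⟩ subset_rfl).2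

lemma eq_bot_of_quotient_solvableRadical [Finite G] {M : Subgroup (G ⧸ solvableRadical G)}
    (hM : M.Normal) (hs : Group.IsSolvable M) : M = ⊥ := by
  have hle := le_solvableRadical (hM.comap (QuotientGroup.mk' _))
    (isSolvable_comap_mk' _ inferInstance M hs)
  rw [eq_bot_iff, ← Subgroup.map_comap_eq_self_of_surjective (QuotientGroup.mk'_surjective _) M]
  refine (Subgroup.map_mono hle).trans (QuotientGroup.map_mk'_self _).le

end SolvableRadical

section MinimalNormal

variable {G : Type*} [Group G]

/-- `M` is a minimal normal subgroup of `G`. -/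
abbrev IsMinimalNormal (M : Subgroup G) : Prop :=
  Minimal (fun K : Subgroup G => K.Normal ∧ K ≠ ⊥) M

lemma IsMinimalNormal.eq_bot_or_eq {M K : Subgroup G} (hM : IsMinimalNormal M) (hK : K.Normal)
    (hle : K ≤ M) : K = ⊥ ∨ K = M :=
  or_iff_not_imp_left.2 fun hne => hM.eq_of_le ⟨hK, hne⟩ hle

lemma exists_isMinimalNormal (G : Type*) [Group G] [Finite G] [Nontrivial G] :
    ∃ M : Subgroup G, IsMinimalNormal M :=
  (Set.toFinite {K : Subgroup G | K.Normal ∧ K ≠ ⊥}).exists_minimal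
    ⟨⊤, inferInstance, top_ne_bot⟩

lemma exists_isMinimalNormal_quotient [Finite G] {P : Subgroup G → Prop} (hbot : P ⊥)
    (htop : ¬ P ⊤) :
    ∃ (N : Subgroup G) (_ : N.Normal) (M : Subgroup (G ⧸ N)),
      P N ∧ IsMinimalNormal M ∧ ¬ P (M.comap (QuotientGroup.mk' N)) := by
  obtain ⟨N, hN⟩ := (Set.toFinite {K : Subgroup G | K.Normal ∧ P K}).exists_maximal
    ⟨⊥, inferInstance, hbot⟩
  have hnormal : N.Normal := hN.1.1
  have : Nontrivial (G ⧸ N) := by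
    rw [QuotientGroup.nontrivial_iff]
    rintro rfl
    exact htop hN.1.2
  obtain ⟨M, hM⟩ := exists_isMinimalNormal (G ⧸ N)
  refine ⟨N, hnormal, M, hN.1.2, hM, fun hP => hM.1.2 ?_⟩
  have hle := hN.2 ⟨hM.1.1.comap (QuotientGroup.mk' N), hP⟩ (QuotientGroup.le_comap_mk' N M)
  rw [eq_bot_iff, ← Subgroup.map_comap_eq_self_of_surjective (QuotientGroup.mk'_surjective N) M]
  exact (Subgroup.map_mono hle).trans (QuotientGroup.map_mk'_self N).le

lemma natCard_comap_mk' (N : Subgroup G) [N.Normal] (M : Subgroup (G ⧸ N)) :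
    Nat.card (M.comap (QuotientGroup.mk' N)) = Nat.card N * Nat.card M :=
  QuotientGroup.card_preimage_mk N (M : Set (G ⧸ N))

/-- `V` is a nontrivial normal subgroup of `G` that is an elementary abelian `p`-group. -/
structure IsNormalElementaryAbelian (p : ℕ) (V : Subgroup G) : Prop where
  ne_bot : V ≠ ⊥
  normal : V.Normal
  isMulCommutative : IsMulCommutative V
  pow_eq_one : ∀ v ∈ V, v ^ p = 1

lemma IsMinimalNormal.eq_bot_or_eq_top_of_characteristic {M : Subgroup G}
    (hM : IsMinimalNormal M) (K : Subgroup M) [K.Characteristic] : K = ⊥ ∨ K = ⊤ := by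
  have := hM.1.1
  refine (hM.eq_bot_or_eq inferInstance (M.map_subtype_le K)).imp (fun h => ?_) (fun h => ?_)
  · rwa [Subgroup.map_eq_bot_iff_of_injective _ M.subtype_injective] at h
  · rw [← Subgroup.comap_map_eq_self_of_injective M.subtype_injective K, h]
    exact Subgroup.subgroupOf_self M

lemma IsMinimalNormal.isMulCommutative {M : Subgroup G} (hM : IsMinimalNormal M)
    [Group.IsSolvable M] : IsMulCommutative M := by
  have : Nontrivial M := (Subgroup.nontrivial_iff_ne_bot M).2 hM.1.2
  have hbot := (hM.eq_bot_or_eq_top_of_characteristic (commutator M)).resolve_right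
    (Group.IsSolvable.commutator_lt_top_of_nontrivial M).ne
  rw [commutator_eq_bot_iff_center_eq_top] at hbot
  exact isMulCommutative_iff.2 fun a b =>
    (Subgroup.mem_center_iff.1 (hbot ▸ Subgroup.mem_top b)) a

open scoped IsMulCommutative in
lemma IsMinimalNormal.isNormalElementaryAbelian [Finite G] {M : Subgroup G}
    (hM : IsMinimalNormal M) (hs : Group.IsSolvable M) {p : ℕ} (hp : p.Prime)
    (hd : p ∣ Nat.card M) : IsNormalElementaryAbelian p M := by
  have hcomm := hM.isMulCommutative
  have hchar : (powMonoidHom (α := M) p).ker.Characteristic :=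
    Subgroup.characteristic_iff_le_comap.2 fun φ x hx => by
      simp_all [MonoidHom.mem_ker, ← map_pow]
  refine ⟨hM.1.2, hM.1.1, hcomm, fun v hv => ?_⟩
  rcases hM.eq_bot_or_eq_top_of_characteristic (powMonoidHom (α := M) p).ker with h | h
  · obtain ⟨g, hg⟩ := exists_orderOf_eq_of_prime_dvd hp hd
    have hmem : g ∈ (powMonoidHom (α := M) p).ker := hg ▸ pow_orderOf_eq_one g
    rw [h, Subgroup.mem_bot] at hmem
    exact absurd hmem (ne_one_of_orderOf_prime hp hg)
  · have hmem : (⟨v, hv⟩ : M) ∈ (powMonoidHom (α := M) p).ker := h ▸ Subgroup.mem_top _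
    exact congrArg Subtype.val hmem

lemma IsNormalElementaryAbelian.exists_orderOf_eq {p : ℕ} (hp : p.Prime) {V : Subgroup G}
    (hV : IsNormalElementaryAbelian p V) : ∃ v ∈ V, orderOf v = p := by
  obtain ⟨v, hv, hne⟩ := V.bot_or_exists_ne_one.resolve_left hV.ne_bot
  exact ⟨v, hv, orderOf_eq_of_prime hp (hV.pow_eq_one v hv) hne⟩

lemma IsNormalElementaryAbelian.isPGroup {p : ℕ} {V : Subgroup G}
    (hV : IsNormalElementaryAbelian p V) : IsPGroup p V := fun v =>
  ⟨1, Subtype.ext (by simpa using hV.pow_eq_one v v.2)⟩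

lemma not_dvd_natCard_of_isPGroup {G : Type*} [Group G] [Finite G] {p r : ℕ} (hp : p.Prime)
    (hr : r.Prime) (hrp : r ≠ p) {S : Subgroup G} (hS : IsPGroup p S) : ¬ r ∣ Nat.card S := by
  have : Fact p.Prime := ⟨hp⟩
  obtain ⟨n, hn⟩ := IsPGroup.iff_card.1 hS
  exact fun hd => hrp ((Nat.prime_dvd_prime_iff_eq hr hp).1 (hr.dvd_of_dvd_pow (hn ▸ hd)))

lemma IsNormalElementaryAbelian.not_dvd_natCard [Finite G] {p q : ℕ} (hp : p.Prime)
    (hq : q.Prime) (hqp : q ≠ p) {V : Subgroup G} (hV : IsNormalElementaryAbelian p V) :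
    ¬ q ∣ Nat.card V :=
  not_dvd_natCard_of_isPGroup hp hq hqp hV.isPGroup

lemma IsNormalElementaryAbelian.dvd_natCard {p : ℕ} (hp : p.Prime)
    {V : Subgroup G} (hV : IsNormalElementaryAbelian p V) : p ∣ Nat.card V := by
  obtain ⟨v, hv, hvp⟩ := hV.exists_orderOf_eq hp
  exact dvd_natCard_of_mem hv hvp

lemma exists_chief_factor_of_primes [Finite G] {X : Set ℕ} (hX : ∀ p ∈ X, p.Prime)
    (hd : ∃ p ∈ X, p ∣ Nat.card G) :
    ∃ (N : Subgroup G) (_ : N.Normal) (M : Subgroup (G ⧸ N)),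
      (∀ p ∈ X, ¬ p ∣ Nat.card N) ∧ IsMinimalNormal M ∧
        ∃ p ∈ X, p ∣ Nat.card M ∧ (Group.IsSolvable M → IsNormalElementaryAbelian p M) := by
  obtain ⟨N, hN, M, hNX, hM, hMX⟩ :=
    exists_isMinimalNormal_quotient (G := G) (P := fun N => ∀ p ∈ X, ¬ p ∣ Nat.card N)
      (fun p hp h => (hX p hp).not_dvd_one (by rwa [Subgroup.card_bot] at h))
      (fun h => hd.elim fun p ⟨hp, hdvd⟩ => h p hp (by rwa [Subgroup.card_top]))
  push Not at hMX
  obtain ⟨p, hp, hdvd⟩ := hMX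
  rw [natCard_comap_mk'] at hdvd
  have hpM := ((hX p hp).dvd_mul.1 hdvd).resolve_left (hNX p hp)
  exact ⟨N, hN, M, hNX, hM, p, hp, hpM, fun hs => hM.isNormalElementaryAbelian hs (hX p hp) hpM⟩

end MinimalNormal

section FixedPointFreeSums

variable {G A : Type*} [Group G] [Ring A]

-- Sum `ρ ((a ^ i * b) ^ j)` over `i, j < q`: every row `i` vanishes, and so does every column
-- `j ≠ 0`, while the column `j = 0` contributes `q`.
lemma natCast_eq_zero_of_sum_pow_eq_zero (ρ : G →* A) {a b : G} {q : ℕ} (hq : q.Prime)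
    (hab : Commute a b) (ha : orderOf a = q) (hb : orderOf b = q) (hnmem : b ∉ Subgroup.zpowers a)
    (hsum : ∀ g : G, orderOf g = q → ∑ i ∈ Finset.range q, ρ g ^ i = 0) : (q : A) = 0 := by
  have hpow (i : ℕ) : orderOf (a ^ i * b) = q := by
    refine orderOf_eq_of_prime hq ?_ fun h => hnmem ?_
    · rw [(hab.pow_left i).mul_pow, pow_right_comm, ← ha, pow_orderOf_eq_one, one_pow, one_mul, ha,
        ← hb, pow_orderOf_eq_one]
    · rw [← inv_eq_of_mul_eq_one_right h]
      exact inv_mem (pow_mem (Subgroup.mem_zpowers a) i)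
  have hinner : ∀ j ∈ Finset.range q, j ≠ 0 → ∑ i ∈ Finset.range q, ρ (a ^ i * b) ^ j = 0 := by
    intro j hj hj0
    have hord : orderOf (a ^ j) = q := by
      rw [Nat.Coprime.orderOf_pow, ha]
      rw [ha]
      exact Nat.coprime_of_lt_prime hj0 (Finset.mem_range.1 hj) hq
    calc ∑ i ∈ Finset.range q, ρ (a ^ i * b) ^ j
        = ∑ i ∈ Finset.range q, ρ (a ^ j) ^ i * ρ (b ^ j) := by
          refine Finset.sum_congr rfl fun i _ => ?_
          rw [← map_pow, (hab.pow_left i).mul_pow, pow_right_comm, map_mul, map_pow]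
      _ = 0 := by rw [← Finset.sum_mul, hsum _ hord, zero_mul]
  calc (q : A) = ∑ i ∈ Finset.range q, ρ (a ^ i * b) ^ 0 := by simp
    _ = ∑ j ∈ Finset.range q, ∑ i ∈ Finset.range q, ρ (a ^ i * b) ^ j :=
      (Finset.sum_eq_single 0 hinner (by simp [hq.pos.ne'])).symm
    _ = ∑ i ∈ Finset.range q, ∑ j ∈ Finset.range q, ρ (a ^ i * b) ^ j := Finset.sum_comm
    _ = 0 := Finset.sum_eq_zero fun i _ => hsum _ (hpow i)

lemma eq_zero_of_coprime_of_natCast_mul_eq_zero {m n : ℕ} (hmn : m.Coprime n) (hm : (m : A) = 0)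
    {x : A} (hx : (n : A) * x = 0) : x = 0 := by
  have hbezout : (m : A) * m.gcdA n + n * m.gcdB n = 1 := by
    have hgcd := Nat.gcd_eq_gcd_ab m n
    rw [hmn.gcd_eq_one] at hgcd
    exact_mod_cast congrArg (Int.cast : ℤ → A) hgcd.symm
  rw [← one_mul x, ← hbezout, hm, zero_mul, zero_add, (Nat.cast_commute n _).eq, mul_assoc, hx,
    mul_zero]

variable (ρ : G →* A) (S : Subgroup G) [Fintype S]

lemma sum_conj_eq_sum_mul {g : G} (hg : g ∈ Subgroup.normalizer (S : Set G))
    (hfree : ∀ s ∈ S, Commute g s → s = 1) :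
    ∑ s : S, ρ (s * g * (s : G)⁻¹) = (∑ s : S, ρ s) * ρ g := by
  let φ : S → S := fun s => s * ⟨g * (s : G)⁻¹ * g⁻¹, (Subgroup.mem_normalizer_iff.1 hg _).1 s⁻¹.2⟩
  have hφ (s : S) : (φ s : G) = s * g * (s : G)⁻¹ * g⁻¹ := by simp [φ, mul_assoc]
  have hinj : Function.Injective φ := by
    intro s t hst
    have hconj : (s : G) * g * (s : G)⁻¹ = t * g * (t : G)⁻¹ := by
      simpa only [hφ, mul_left_inj] using congrArg Subtype.val hst
    have hcomm : Commute g ((t : G)⁻¹ * s) := by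
      rw [mul_inv_eq_iff_eq_mul] at hconj
      simp only [commute_iff_eq, mul_assoc, hconj, inv_mul_cancel_left]
    exact Subtype.ext (inv_mul_eq_one.1 (hfree _ (mul_mem (inv_mem t.2) s.2) hcomm)).symm
  rw [← (Finite.injective_iff_bijective.1 hinj).sum_comp fun s : S => ρ s, Finset.sum_mul]
  exact Finset.sum_congr rfl fun s _ => by rw [hφ, ← map_mul, inv_mul_cancel_right]

-- Sum the relation over the `S`-conjugates of `h`: as `h` acts on `S` without fixed points, the
-- conjugates of `h ^ i` run through the coset `S h ^ i` for every `0 < i < orderOf h`.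
lemma natCard_eq_sum_of_sum_pow_eq_zero {h : G} (hprime : (orderOf h).Prime)
    (hS : h ∈ Subgroup.normalizer (S : Set G)) (hfree : ∀ s ∈ S, Commute h s → s = 1)
    (hsum : ∑ i ∈ Finset.range (orderOf h), ρ h ^ i = 0) : (Nat.card S : A) = ∑ s : S, ρ s := by
  obtain ⟨k, hk⟩ := Nat.exists_eq_succ_of_ne_zero hprime.ne_zero
  have hpow : ∀ i ∈ Finset.range k,
      ∑ s : S, ρ (s * h ^ (i + 1) * (s : G)⁻¹) = (∑ s : S, ρ s) * ρ h ^ (i + 1) := by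
    intro i hi
    rw [← map_pow]
    refine sum_conj_eq_sum_mul ρ S (pow_mem hS _) fun s hs hcomm => hfree s hs ?_
    obtain ⟨m, hm⟩ := exists_pow_eq_self_of_coprime (x := h) (n := i + 1)
      (Nat.coprime_of_lt_prime i.succ_ne_zero (by simp_all) hprime).symm
    rw [← hm]
    exact hcomm.pow_left m
  have hzero : ∑ i ∈ Finset.range (orderOf h), ∑ s : S, ρ (s * h ^ i * (s : G)⁻¹) = 0 := by
    rw [Finset.sum_comm]
    refine Finset.sum_eq_zero fun s _ => ?_
    simp_rw [map_mul, map_pow, ← Finset.sum_mul, ← Finset.mul_sum, hsum, mul_zero, zero_mul]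
  rw [hk, Finset.sum_range_succ'] at hsum hzero
  rw [pow_zero, add_eq_zero_iff_eq_neg] at hsum
  rw [Finset.sum_congr rfl hpow, ← Finset.mul_sum, hsum, mul_neg_one, neg_add_eq_zero] at hzero
  simpa [Nat.card_eq_fintype_card] using hzero.symm

omit [Fintype S] in
lemma natCard_mul_map_sub_one_eq_zero [Finite S] {h : G} (hprime : (orderOf h).Prime)
    (hS : h ∈ Subgroup.normalizer (S : Set G)) (hfree : ∀ s ∈ S, Commute h s → s = 1)
    (hsum : ∑ i ∈ Finset.range (orderOf h), ρ h ^ i = 0) {s : G} (hs : s ∈ S) :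
    (Nat.card S : A) * (ρ s - 1) = 0 := by
  have := Fintype.ofFinite S
  rw [natCard_eq_sum_of_sum_pow_eq_zero ρ S hprime hS hfree hsum, mul_sub_one, sub_eq_zero,
    Finset.sum_mul, ← Equiv.sum_comp (Equiv.mulRight (⟨s, hs⟩ : S)) fun t : S => ρ t]
  simp

end FixedPointFreeSums

section ConjRep

variable {G : Type*} [Group G]

open scoped IsMulCommutative

/-- The conjugation action of `G` on an abelian normal subgroup `V`, as a representation in the
endomorphism ring of `V` written additively. -/
def conjRep (V : Subgroup G) [V.Normal] [IsMulCommutative V] :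
    G →* AddMonoid.End (Additive V) where
  toFun g := (MulAut.conjNormal g : MulAut V).toMonoidHom.toAdditive
  map_one' := by rw [map_one]; rfl
  map_mul' g h := by rw [map_mul]; rfl

variable (V : Subgroup G) [V.Normal] [IsMulCommutative V]

lemma conjRep_apply_eq_self_iff (g : G) (v : V) :
    conjRep V g (Additive.ofMul v) = Additive.ofMul v ↔ Commute g v := by
  change MulAut.conjNormal g v = v ↔ _
  rw [Subtype.ext_iff, MulAut.conjNormal_apply, mul_inv_eq_iff_eq_mul, commute_iff_eq]

omit [V.Normal] in
lemma natCast_end_eq_zero {p : ℕ} (hexp : ∀ v ∈ V, v ^ p = 1) :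
    (p : AddMonoid.End (Additive V)) = 0 := by
  ext v
  exact hexp v.toMul v.toMul.2

lemma sum_conjRep_pow_eq_zero {p q : ℕ} (hp : p.Prime) (hq : q.Prime) (hpq : p ≠ q)
    (hexp : ∀ v ∈ V, v ^ p = 1) (hno : ¬ HasOrder G (p * q)) {h : G} (hh : orderOf h = q) :
    ∑ i ∈ Finset.range q, conjRep V h ^ i = 0 := by
  set σ := ∑ i ∈ Finset.range q, conjRep V h ^ i
  have hfix : conjRep V h * σ = σ := by
    rw [← sub_eq_zero, ← sub_one_mul, mul_geom_sum, ← map_pow, ← hh, pow_orderOf_eq_one, map_one,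
      sub_self]
  ext v
  by_contra hne
  have hcomm : Commute h (σ v).toMul :=
    (conjRep_apply_eq_self_iff V h _).1 (DFunLike.congr_fun hfix v)
  have hord : orderOf ((σ v).toMul : G) = p :=
    orderOf_eq_of_prime hp (hexp _ (σ v).toMul.2) hne
  exact hno (.of_commute hp hq hpq hord hh hcomm.symm)

lemma IsNormalElementaryAbelian.pRankLEOne {p q : ℕ} (hp : p.Prime)
    (hq : q.Prime) (hpq : p ≠ q) {V : Subgroup G} (hV : IsNormalElementaryAbelian p V)
    (hno : ¬ HasOrder G (p * q)) : PRankLEOne q G := by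
  have := hV.normal
  have := hV.isMulCommutative
  intro a b ha hb hab
  by_contra hnmem
  have hq0 := natCast_eq_zero_of_sum_pow_eq_zero (conjRep V) hq hab ha hb hnmem fun g hg =>
    sum_conjRep_pow_eq_zero V hp hq hpq hV.pow_eq_one hno hg
  have hone : (1 : AddMonoid.End (Additive V)) = 0 :=
    eq_zero_of_coprime_of_natCast_mul_eq_zero ((Nat.coprime_primes hp hq).2 hpq)
      (natCast_end_eq_zero V hV.pow_eq_one) (by rw [hq0, zero_mul])
  obtain ⟨v, hv, hvp⟩ := hV.exists_orderOf_eq hp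
  exact ne_one_of_orderOf_prime hp hvp
    (congrArg Subtype.val (DFunLike.congr_fun hone (Additive.ofMul (⟨v, hv⟩ : V))))

lemma IsNormalElementaryAbelian.commute_of_fixedPointFree [Finite G] {p q : ℕ} (hp : p.Prime)
    (hq : q.Prime) (hpq : p ≠ q) {V : Subgroup G} (hV : IsNormalElementaryAbelian p V)
    (hno : ¬ HasOrder G (p * q)) {S : Subgroup G} (hpS : ¬ p ∣ Nat.card S) {h : G}
    (hh : orderOf h = q) (hS : h ∈ Subgroup.normalizer (S : Set G))
    (hfree : ∀ s ∈ S, Commute h s → s = 1) {s v : G} (hs : s ∈ S) (hv : v ∈ V) : Commute s v := by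
  have := hV.normal
  have := hV.isMulCommutative
  subst hh
  have hmul := natCard_mul_map_sub_one_eq_zero (conjRep V) S hq hS hfree
    (sum_conjRep_pow_eq_zero V hp hq hpq hV.pow_eq_one hno rfl) hs
  have hzero := eq_zero_of_coprime_of_natCast_mul_eq_zero ((hp.coprime_iff_not_dvd).2 hpS)
    (natCast_end_eq_zero V hV.pow_eq_one) hmul
  exact (conjRep_apply_eq_self_iff V s ⟨v, hv⟩).1 (DFunLike.congr_fun (sub_eq_zero.1 hzero) _)

end ConjRep

section Frattini

open Subgroup

variable {G : Type*} [Group G] [Finite G] {p q : ℕ}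

lemma exists_orderOf_pow_eq_orderOf_map {H : Type*} [Group H] (f : G →* H) (g : G) :
    ∃ m, orderOf (g ^ m) = orderOf (f g) :=
  ⟨_, orderOf_pow_orderOf_div (orderOf_pos g).ne' (orderOf_map_dvd f g)⟩

lemma exists_central_orderOf_eq (hp : p.Prime) {P : Subgroup G} (hP : IsPGroup p P)
    (hne : P ≠ ⊥) : ∃ z ∈ P, orderOf z = p ∧ ∀ x ∈ P, Commute x z := by
  have := Fact.mk hp
  have : Nontrivial P := (nontrivial_iff_ne_bot P).2 hne
  obtain ⟨k, hk0, hk⟩ := (hP.to_subgroup (center P)).nontrivial_iff_card.1 hP.center_nontrivial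
  obtain ⟨z, hz⟩ := exists_orderOf_eq_of_prime_dvd hp (hk ▸ dvd_pow_self p hk0.ne')
  refine ⟨z.1.1, z.1.2, by rw [orderOf_coe, orderOf_coe, hz], fun x hx => ?_⟩
  exact congrArg Subtype.val (mem_center_iff.1 z.2 ⟨x, hx⟩)

lemma PRankLEOne.exists_forall_mem_zpowers (hp : p.Prime) (hr : PRankLEOne p G) {P : Subgroup G}
    (hP : IsPGroup p P) (hne : P ≠ ⊥) :
    ∃ z ∈ P, orderOf z = p ∧ ∀ x ∈ P, orderOf x = p → x ∈ zpowers z := by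
  obtain ⟨z, hz, hzp, hcomm⟩ := exists_central_orderOf_eq hp hP hne
  exact ⟨z, hz, hzp, fun x hx hxp => hr z x hzp hxp (hcomm x hx).symm⟩

lemma mem_normalizer_zpowers {z n : G} (h : n * z * n⁻¹ ∈ zpowers z) :
    n ∈ normalizer (zpowers z : Set G) := by
  refine mem_normalizer_fintype ?_
  rintro _ ⟨k, rfl⟩
  rw [SetLike.mem_coe, ← conj_zpow]
  exact zpow_mem h k

lemma PRankLEOne.exists_conj_mem_zpowers (hp : p.Prime) (hr : PRankLEOne p G) {x y : G}
    (hx : orderOf x = p) (hy : orderOf y = p) : ∃ g, g * x * g⁻¹ ∈ zpowers y := by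
  have := Fact.mk hp
  have isPGroup_zpowers {g : G} (hg : orderOf g = p) : IsPGroup p (zpowers g) :=
    IsPGroup.of_card (n := 1) (by rw [Nat.card_zpowers, hg, pow_one])
  obtain ⟨P, hP⟩ := (isPGroup_zpowers hx).exists_le_sylow
  obtain ⟨Q, hQ⟩ := (isPGroup_zpowers hy).exists_le_sylow
  rw [zpowers_le] at hP hQ
  have hne : (Q : Subgroup G) ≠ ⊥ := fun h =>
    ne_one_of_orderOf_prime hp hy (mem_bot.1 (h ▸ hQ))
  obtain ⟨z, -, hzp, hz_unique⟩ := hr.exists_forall_mem_zpowers hp Q.isPGroup' hne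
  have hzpowers : zpowers y = zpowers z := eq_of_le_of_card_ge (zpowers_le.2 (hz_unique y hQ hy))
    (by rw [Nat.card_zpowers, Nat.card_zpowers, hy, hzp])
  obtain ⟨g, hg⟩ := MulAction.exists_smul_eq G P Q
  refine ⟨g, hzpowers ▸ hz_unique _ ?_ (hx ▸ (MulAut.conj g).orderOf_eq x)⟩
  exact hg ▸ ⟨x, hP, rfl⟩

lemma PRankLEOne.normalizer_zpowers_sup_eq_top (hp : p.Prime) (hr : PRankLEOne p G) {z : G}
    (hz : orderOf z = p) (U : Subgroup G) [U.Normal] (hd : p ∣ Nat.card U) :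
    normalizer (zpowers z : Set G) ⊔ U = ⊤ := by
  obtain ⟨y, hy⟩ := exists_orderOf_eq_of_prime_dvd hp hd
  obtain ⟨g, hg⟩ := hr.exists_conj_mem_zpowers hp hz ((orderOf_coe y).trans hy)
  have hU : U.Normal := inferInstance
  have hzU : z ∈ U := by
    simpa using hU.mem_comm_iff.1 (zpowers_le.2 y.2 hg)
  refine eq_top_iff.2 fun n _ => ?_
  obtain ⟨u, hu⟩ := (hr.subgroup hp U).exists_conj_mem_zpowers hp
    (x := ⟨n * z * n⁻¹, hU.conj_mem z hzU n⟩) (y := ⟨z, hzU⟩)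
    (by rw [orderOf_mk, ← hz]; exact (MulAut.conj n).orderOf_eq z) ((orderOf_mk z hzU).trans hz)
  obtain ⟨k, hk⟩ := mem_zpowers_iff.1 hu
  have hun : (u : G) * n ∈ normalizer (zpowers z : Set G) := by
    refine mem_normalizer_zpowers (mem_zpowers_iff.2 ⟨k, ?_⟩)
    simpa [mul_assoc] using congrArg Subtype.val hk
  rw [show n = (u : G)⁻¹ * (u * n) by group]
  exact mul_mem (mem_sup_right (inv_mem u.2)) (mem_sup_left hun)

omit [Finite G] in
lemma commute_of_normalizerMonoidHom_eq_one {z : G} {n : normalizer (zpowers z : Set G)}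
    (h : (zpowers z).normalizerMonoidHom n = 1) : Commute (n : G) z := by
  rw [← MonoidHom.mem_ker, normalizerMonoidHom_ker, mem_subgroupOf, mem_centralizer_iff] at h
  exact (h z (mem_zpowers z)).symm

omit [Finite G] in
lemma commute_of_mem_commutator_normalizer_zpowers {z : G}
    {n : normalizer (zpowers z : Set G)} (hn : n ∈ commutator (normalizer (zpowers z : Set G))) :
    Commute (n : G) z := by
  let e := IsCyclic.mulAutMulEquiv (zpowers z)
  refine commute_of_normalizerMonoidHom_eq_one ?_
  have hle := Abelianization.commutator_subset_ker
    (e.toMonoidHom.comp (zpowers z).normalizerMonoidHom) hn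
  exact (map_eq_one_iff e e.injective).1 hle

lemma commute_of_mem_normalizer_zpowers (hp : p.Prime) (hq : q.Prime) (hqp : ¬ q ∣ p - 1)
    {z n : G} (hz : orderOf z = p) (hn : n ∈ normalizer (zpowers z : Set G))
    (hnq : orderOf n = q) : Commute n z := by
  refine commute_of_normalizerMonoidHom_eq_one (n := ⟨n, hn⟩) ?_
  by_contra hne
  have hord := orderOf_map_of_prime hq ((orderOf_mk n hn).trans hnq) hne
  have hdvd : q ∣ Nat.card (MulAut (zpowers z)) := hord ▸ orderOf_dvd_natCard _
  rw [IsCyclic.card_mulAut, Nat.card_zpowers, hz, Nat.totient_prime hp] at hdvd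
  exact hqp hdvd

omit [Finite G] in
lemma surjective_mk'_comp_subtype {N U : Subgroup G} [U.Normal] (h : N ⊔ U = ⊤) :
    Function.Surjective ((QuotientGroup.mk' U).comp N.subtype) := by
  rw [← MonoidHom.range_eq_top, MonoidHom.range_comp, range_subtype, eq_top_iff,
    ← MonoidHom.range_eq_top.2 (QuotientGroup.mk'_surjective U), MonoidHom.range_eq_map, ← h,
    Subgroup.map_sup, QuotientGroup.map_mk'_self, sup_bot_eq]

lemma exists_mem_orderOf_eq_of_sup_eq_top (hq : q.Prime) {N U : Subgroup G} [U.Normal]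
    (h : N ⊔ U = ⊤) (hd : q ∣ Nat.card (G ⧸ U)) : ∃ n ∈ N, orderOf n = q := by
  obtain ⟨y, hy⟩ := exists_orderOf_eq_of_prime_dvd hq hd
  obtain ⟨n, hn⟩ := surjective_mk'_comp_subtype h y
  obtain ⟨m, hm⟩ := exists_orderOf_pow_eq_orderOf_map ((QuotientGroup.mk' U).comp N.subtype) n
  exact ⟨_, (n ^ m).2, by rw [orderOf_coe, hm, hn, hy]⟩

omit [Finite G] in
lemma map_commutator_of_surjective {H : Type*} [Group H] {f : G →* H}
    (hf : Function.Surjective f) : (commutator G).map f = commutator H := by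
  rw [map_commutator_eq, MonoidHom.range_eq_top.2 hf, ← _root_.commutator_def]

lemma PRankLEOne.hasOrder_of_dvd_commutator_quotient (hp : p.Prime) (hq : q.Prime) (hpq : p ≠ q)
    (hr : PRankLEOne p G) (U : Subgroup G) [U.Normal] (hpU : p ∣ Nat.card U)
    (hqU : q ∣ Nat.card (commutator (G ⧸ U))) : HasOrder G (p * q) := by
  obtain ⟨⟨z, hzU⟩, hzp⟩ := exists_orderOf_eq_of_prime_dvd hp hpU
  rw [orderOf_mk] at hzp
  have hN := hr.normalizer_zpowers_sup_eq_top hp hzp U hpU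
  obtain ⟨⟨y, hy⟩, hyq⟩ := exists_orderOf_eq_of_prime_dvd hq hqU
  rw [orderOf_mk] at hyq
  rw [← map_commutator_of_surjective (surjective_mk'_comp_subtype hN)] at hy
  obtain ⟨n, hn, rfl⟩ := hy
  obtain ⟨m, hm⟩ := exists_orderOf_pow_eq_orderOf_map
    ((QuotientGroup.mk' U).comp (normalizer (zpowers z : Set G)).subtype) n
  refine .of_commute hp hq hpq hzp (b := (n : G) ^ m) ?_
    ((commute_of_mem_commutator_normalizer_zpowers hn).pow_left m).symm
  rw [← coe_pow, orderOf_coe, hm, hyq]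

lemma PRankLEOne.hasOrder_of_dvd_natCard_quotient (hp : p.Prime) (hq : q.Prime) (hpq : p ≠ q)
    (hr : PRankLEOne p G) (U : Subgroup G) [U.Normal] (hpU : p ∣ Nat.card U)
    (hqU : q ∣ Nat.card (G ⧸ U)) (hqp : ¬ q ∣ p - 1) : HasOrder G (p * q) := by
  obtain ⟨⟨z, hzU⟩, hzp⟩ := exists_orderOf_eq_of_prime_dvd hp hpU
  rw [orderOf_mk] at hzp
  have hN := hr.normalizer_zpowers_sup_eq_top hp hzp U hpU
  obtain ⟨n, hn, hnq⟩ := exists_mem_orderOf_eq_of_sup_eq_top hq hN hqU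
  exact .of_commute hp hq hpq hzp hnq
    (commute_of_mem_normalizer_zpowers hp hq hqp hzp hn hnq).symm

omit [Finite G] in
lemma dvd_natCard_quotient (hq : q.Prime) (U : Subgroup G) (hd : q ∣ Nat.card G)
    (hU : ¬ q ∣ Nat.card U) : q ∣ Nat.card (G ⧸ U) := by
  rw [card_eq_card_quotient_mul_card_subgroup U] at hd
  exact (hq.dvd_mul.1 hd).resolve_right hU

lemma hasOrder_of_not_dvd_natCard_commutator (hp : p.Prime) (hq : q.Prime) (hpq : p ≠ q)
    (hpG : p ∣ Nat.card G) (hqG : q ∣ Nat.card G) (hp' : ¬ p ∣ Nat.card (commutator G))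
    (hq' : ¬ q ∣ Nat.card (commutator G)) : HasOrder G (p * q) := by
  obtain ⟨a, ha⟩ := exists_orderOf_eq_of_prime_dvd hp (dvd_natCard_quotient hp _ hpG hp')
  obtain ⟨b, hb⟩ := exists_orderOf_eq_of_prime_dvd hq (dvd_natCard_quotient hq _ hqG hq')
  exact .of_quotient (N := commutator G)
    (.of_commute hp hq hpq ha hb (mul_comm (G := Abelianization G) a b))

lemma dvd_natCard_commutator_quotient (hq : q.Prime) (U : Subgroup G) [U.Normal]
    (hU : ¬ q ∣ Nat.card U) (hd : q ∣ Nat.card (commutator G)) :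
    q ∣ Nat.card (commutator (G ⧸ U)) := by
  obtain ⟨x, hx⟩ := exists_orderOf_eq_of_prime_dvd hq hd
  rw [← orderOf_coe] at hx
  have hne : QuotientGroup.mk' U (x : G) ≠ 1 := fun h =>
    hU (dvd_natCard_of_mem ((QuotientGroup.eq_one_iff _).1 h) hx)
  refine dvd_natCard_of_mem ?_ (orderOf_map_of_prime hq hx hne)
  rw [← map_commutator_of_surjective (QuotientGroup.mk'_surjective U)]
  exact mem_map_of_mem _ x.2

end Frattini

namespace A5

/-- The double transposition `(0 1)(2 3)` in `A₅`. -/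
def v₁ : A5 :=
  ⟨Equiv.swap 0 1 * Equiv.swap 2 3, by rw [Equiv.Perm.mem_alternatingGroup]; decide⟩

/-- The double transposition `(0 2)(1 3)` in `A₅`. -/
def v₂ : A5 :=
  ⟨Equiv.swap 0 2 * Equiv.swap 1 3, by rw [Equiv.Perm.mem_alternatingGroup]; decide⟩

/-- The 3-cycle `0 ↦ 1 ↦ 2 ↦ 0` in `A₅`. -/
def threeCycle : A5 :=
  ⟨Equiv.swap 0 1 * Equiv.swap 1 2, by rw [Equiv.Perm.mem_alternatingGroup]; decide⟩

/-- The Klein four-group `{1, v₁, v₂, v₁ v₂}`, a Sylow 2-subgroup of `A₅`. -/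
def kleinFour : Subgroup A5 where
  carrier := {1, v₁, v₂, v₁ * v₂}
  one_mem' := Or.inl rfl
  mul_mem' := by
    rintro a b (rfl | rfl | rfl | rfl) (rfl | rfl | rfl | rfl) <;>
      simp only [Set.mem_insert_iff, Set.mem_singleton_iff] <;> decide
  inv_mem' := by
    rintro a (rfl | rfl | rfl | rfl) <;>
      simp only [Set.mem_insert_iff, Set.mem_singleton_iff] <;> decide

lemma mem_kleinFour {x : A5} : x ∈ kleinFour ↔ x = 1 ∨ x = v₁ ∨ x = v₂ ∨ x = v₁ * v₂ := Iff.rfl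

lemma natCard_kleinFour : Nat.card kleinFour = 4 := by
  have hcoe : (kleinFour : Set A5) = ({1, v₁, v₂, v₁ * v₂} : Finset A5) := by
    ext x
    simp [mem_kleinFour]
  change (kleinFour : Set A5).ncard = 4
  rw [hcoe, Set.ncard_coe_finset]
  decide

lemma orderOf_threeCycle : orderOf threeCycle = 3 :=
  orderOf_eq_of_prime Nat.prime_three (by decide) (by decide)

lemma threeCycle_mem_normalizer_kleinFour :
    threeCycle ∈ Subgroup.normalizer (kleinFour : Set A5) := by
  refine Subgroup.mem_normalizer_fintype ?_
  rintro a (rfl | rfl | rfl | rfl) <;> rw [SetLike.mem_coe, mem_kleinFour] <;> decide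

lemma natCard_sylow_two_dvd : Nat.card (Sylow 2 A5) ∣ 5 := by
  have := Fact.mk Nat.prime_two
  have hfact : Nat.factorization 60 2 = 2 := by
    rw [show 60 = 2 ^ 2 * 15 by rfl, Nat.factorization_mul (by norm_num) (by norm_num),
      Finsupp.add_apply, Nat.prime_two.factorization_pow, Finsupp.single_eq_same,
      Nat.factorization_eq_zero_of_not_dvd (by norm_num)]
  let P : Sylow 2 A5 := Sylow.ofCard kleinFour (by rw [natCard_kleinFour, natCard_A5, hfact]; rfl)
  have htwelve : 4 * 3 ∣ Nat.card (Subgroup.normalizer (P : Set A5)) := by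
    refine Nat.Coprime.mul_dvd_of_dvd_of_dvd (by norm_num) ?_ ?_
    · exact natCard_kleinFour ▸ Subgroup.card_dvd_of_le Subgroup.le_normalizer
    · exact dvd_natCard_of_mem threeCycle_mem_normalizer_kleinFour orderOf_threeCycle
  have hindex := Subgroup.card_mul_index (Subgroup.normalizer (P : Set A5))
  rw [← P.card_eq_index_normalizer, natCard_A5] at hindex
  exact Nat.dvd_of_mul_dvd_mul_left (k := 4 * 3) (by norm_num)
    ((mul_dvd_mul_right htwelve _).trans (hindex ▸ dvd_rfl))

end A5

section Automorphisms

open Subgroup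

variable {G : Type*} [Group G]

lemma natCard_mulAut_dvd_factorial [Finite G] [IsSimpleGroup G] {p : ℕ} (P : Sylow p G)
    (hP : ¬ (P : Subgroup G).Normal) : Nat.card (MulAut G) ∣ (Nat.card (Sylow p G)).factorial := by
  let f : MulAut G →* Equiv.Perm (Sylow p G) := MulAction.toPermHom _ _
  have hbot : f.ker.comap MulAut.conj = ⊥ := by
    refine (Normal.eq_bot_or_eq_top inferInstance).resolve_right fun htop => hP ⟨fun x hx g => ?_⟩
    have hg : g ∈ f.ker.comap MulAut.conj := htop ▸ mem_top g
    have hfix : MulAut.conj g • P = P := DFunLike.congr_fun (MonoidHom.mem_ker.1 hg) P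
    have hmem : MulAut.conj g x ∈ MulAut.conj g • P := ⟨x, hx, rfl⟩
    rwa [hfix] at hmem
  have hinj : Function.Injective f := (injective_iff_map_eq_one f).2 fun φ hφ => by
    ext g
    have hconj : MulAut.conj (φ g * g⁻¹) = φ * (MulAut.conj g * φ⁻¹ * (MulAut.conj g)⁻¹) := by
      ext x
      simp [mul_assoc]
    have hmem : φ g * g⁻¹ ∈ f.ker.comap MulAut.conj := by
      rw [mem_comap, hconj]
      exact mul_mem hφ ((inferInstance : f.ker.Normal).conj_mem _ (inv_mem hφ) _)
    rwa [hbot, mem_bot, mul_inv_eq_one] at hmem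
  exact Nat.card_perm (α := Sylow p G) ▸ card_dvd_of_injective f hinj

lemma natCard_mulAut_dvd (e : G ≃* A5) : Nat.card (MulAut G) ∣ 120 := by
  have := Fact.mk Nat.prime_two
  obtain ⟨P⟩ : Nonempty (Sylow 2 A5) := inferInstance
  have hnormal : ¬ (P : Subgroup A5).Normal := fun h => by
    rcases h.eq_bot_or_eq_top with hP | hP
    · exact P.ne_bot_of_dvd_card (natCard_A5 ▸ by norm_num) hP
    · have : Group.IsNilpotent (⊤ : Subgroup A5) := (hP ▸ P.isPGroup').isNilpotent
      exact not_isSolvable_of_mulEquiv_A5 topEquiv inferInstance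
  rw [Nat.card_congr (MulAut.congr e).toEquiv]
  exact (natCard_mulAut_dvd_factorial P hnormal).trans
    (Nat.factorial_dvd_factorial (Nat.le_of_dvd (by norm_num) A5.natCard_sylow_two_dvd))

lemma not_dvd_one_hundred_twenty {q : ℕ} (hq : q.Prime) (hq' : q ∉ ({2, 3, 5} : Set ℕ)) :
    ¬ q ∣ 120 := fun hd => by
  rw [show 120 = 2 ^ 3 * (3 * 5) by rfl, hq.dvd_mul, hq.dvd_mul] at hd
  rcases hd with hd | hd | hd
  · exact hq' (Or.inl ((Nat.prime_dvd_prime_iff_eq hq Nat.prime_two).1 (hq.dvd_of_dvd_pow hd)))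
  · exact hq' (Or.inr (Or.inl ((Nat.prime_dvd_prime_iff_eq hq Nat.prime_three).1 hd)))
  · exact hq' (Or.inr (Or.inr ((Nat.prime_dvd_prime_iff_eq hq Nat.prime_five).1 hd)))

lemma prime_of_mem_two_three_five {p : ℕ} (hp : p ∈ ({2, 3, 5} : Set ℕ)) : p.Prime := by
  rcases hp with rfl | rfl | rfl <;> norm_num

lemma commute_of_mem_normalizer_of_mulEquiv_A5 [Finite G] {T : Subgroup G} (e : T ≃* A5) {g : G}
    {q : ℕ} (hq : q.Prime) (hq' : q ∉ ({2, 3, 5} : Set ℕ)) (hg : orderOf g = q)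
    (hgT : g ∈ normalizer (T : Set G)) {t : G} (ht : t ∈ T) : Commute g t := by
  have hone : T.normalizerMonoidHom ⟨g, hgT⟩ = 1 := by
    by_contra hne
    have hord := orderOf_map_of_prime hq ((orderOf_mk g hgT).trans hg) hne
    exact not_dvd_one_hundred_twenty hq hq'
      (hord ▸ (_root_.orderOf_dvd_natCard _).trans (natCard_mulAut_dvd e))
  rw [← MonoidHom.mem_ker, normalizerMonoidHom_ker, mem_subgroupOf, mem_centralizer_iff] at hone
  exact (hone t ht).symm

lemma exists_orderOf_eq_of_mulEquiv_A5 {T : Subgroup G} (e : T ≃* A5) {p : ℕ}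
    (hp : p ∈ ({2, 3, 5} : Set ℕ)) : ∃ x ∈ T, orderOf x = p := by
  have hd : p ∣ Nat.card A5 := by
    rw [natCard_A5]
    rcases hp with rfl | rfl | rfl <;> norm_num
  obtain ⟨x, hx⟩ := exists_orderOf_eq_of_prime_dvd (prime_of_mem_two_three_five hp) hd
  exact ⟨e.symm x, (e.symm x).2, by rw [orderOf_coe, e.symm.orderOf_eq, hx]⟩

lemma center_eq_bot_of_mulEquiv_A5 (e : G ≃* A5) : center G = ⊥ := by
  have : IsSimpleGroup G := e.isSimpleGroup
  refine (Normal.eq_bot_or_eq_top inferInstance).resolve_right fun htop =>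
    not_isSolvable_of_mulEquiv_A5 e <| Group.isSolvable_of_comm fun a b =>
      mem_center_iff.1 (htop ▸ mem_top b : b ∈ center G) a

end Automorphisms

section A5Component

open Subgroup

variable {G : Type u} [Group G]

lemma IsMinimalNormal.map_mulEquiv {T : Subgroup G} (hT : IsMinimalNormal T) (φ : G ≃* G) :
    IsMinimalNormal (T.map φ.toMonoidHom) := by
  refine ⟨⟨hT.1.1.map _ φ.surjective, ?_⟩, fun K hK hle => ?_⟩
  · rw [Ne, map_eq_bot_iff_of_injective _ φ.injective]
    exact hT.1.2
  · have hcomap : K.comap φ.toMonoidHom ≤ T := by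
      rw [← comap_map_eq_self_of_injective (f := φ.toMonoidHom) φ.injective T]
      exact comap_mono hle
    refine map_le_iff_le_comap.2 (hT.2 ⟨hK.1.comap _, fun hbot => hK.2 ?_⟩ hcomap)
    rw [← map_comap_eq_self_of_surjective (f := φ.toMonoidHom) φ.surjective K, hbot,
      Subgroup.map_bot]

lemma IsMinimalNormal.eq_or_commute {M N : Subgroup G} (hM : IsMinimalNormal M)
    (hN : IsMinimalNormal N) : M = N ∨ ∀ x ∈ M, ∀ y ∈ N, Commute x y := by
  have := hM.1.1
  have := hN.1.1
  rcases hM.eq_bot_or_eq (K := M ⊓ N) inferInstance inf_le_left with hbot | hle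
  · exact Or.inr fun x hx y hy =>
      commute_of_normal_of_disjoint M N hM.1.1 hN.1.1 (disjoint_iff.2 hbot) x y hx hy
  · exact Or.inl ((hN.eq_bot_or_eq hM.1.1 (inf_eq_left.1 hle)).resolve_left hM.1.2)

lemma IsMinimalNormal.le_of_forall_conj_mem {M T K : Subgroup G} (hM : IsMinimalNormal M)
    (hTM : T ≤ M) (hT : T ≠ ⊥) (h : ∀ g, ∀ t ∈ T, g * t * g⁻¹ ∈ K) : M ≤ K := by
  have := hM.1.1
  have hle : normalClosure (T : Set G) ≤ M := normalClosure_le_normal hTM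
  have hne : normalClosure (T : Set G) ≠ ⊥ := fun hbot =>
    hT (eq_bot_iff.2 (hbot ▸ subset_normalClosure))
  rw [← (hM.eq_bot_or_eq inferInstance hle).resolve_left hne, normalClosure, closure_le]
  intro x hx
  obtain ⟨t, ht, hconj⟩ := Group.mem_conjugatesOfSet_iff.1 hx
  obtain ⟨g, rfl⟩ := isConj_iff.1 hconj
  exact h g t ht

lemma IsMinimalNormal.isSolvable_of_subgroupOf [Finite G] {M T : Subgroup G}
    (hM : IsMinimalNormal M) (hT : IsMinimalNormal (T.subgroupOf M)) [Group.IsSolvable T] :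
    Group.IsSolvable M := by
  have hs : Group.IsSolvable (T.subgroupOf M) := Group.isSolvable_of_isSolvable_injective
    (f := M.subtype.subgroupComap T) fun a b hab =>
      Subtype.ext (Subtype.ext (congrArg (fun t : T => (t : G)) hab))
  have htop := (hM.eq_bot_or_eq_top_of_characteristic (solvableRadical M)).resolve_left fun hbot =>
    hT.1.2 (eq_bot_iff.2 (hbot ▸ le_solvableRadical hT.1.1 hs))
  have : Group.IsSolvable (⊤ : Subgroup M) := htop ▸ inferInstance
  exact Group.isSolvable_of_surjective (f := (topEquiv (G := M)).toMonoidHom) topEquiv.surjective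

lemma mem_normalizer_or_commute_conj [Finite G] {M T : Subgroup G} [M.Normal] (hTM : T ≤ M)
    (hT : IsMinimalNormal (T.subgroupOf M)) (g : G) :
    g ∈ normalizer (T : Set G) ∨ ∀ s ∈ T, ∀ t ∈ T, Commute s (g * t * g⁻¹) := by
  have hmem : ∀ t (ht : t ∈ T), MulAut.conjNormal g ⟨t, hTM ht⟩ ∈
      (T.subgroupOf M).map (MulAut.conjNormal g).toMonoidHom := fun t ht => ⟨_, ht, rfl⟩
  refine (hT.eq_or_commute (hT.map_mulEquiv (MulAut.conjNormal g))).imp (fun heq => ?_)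
    (fun hcomm s hs t ht => ?_)
  · exact mem_normalizer_fintype fun t ht => mem_subgroupOf.1 (heq.symm.le (hmem t ht))
  · exact congrArg Subtype.val (hcomm ⟨s, hTM hs⟩ hs _ (hmem t ht)).eq

lemma IsMinimalNormal.isSimpleGroup_of_subgroupOf [Finite G] {M T : Subgroup G}
    (hM : IsMinimalNormal M) (hTM : T ≤ M) (hT : IsMinimalNormal (T.subgroupOf M)) :
    IsSimpleGroup T := by
  have := hM.1.1
  have hTbot : T ≠ ⊥ := fun h => hT.1.2 (by rw [h, bot_subgroupOf])
  have : Nontrivial T := (nontrivial_iff_ne_bot T).2 hTbot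
  refine ⟨fun K hK => ?_⟩
  have hKT := map_subtype_le K
  have hKM := hKT.trans hTM
  have hle : M ≤ normalizer (K.map T.subtype : Set G) := by
    refine hM.le_of_forall_conj_mem hTM hTbot fun g t ht => mem_normalizer_fintype ?_
    rintro _ ⟨k, hk, rfl⟩
    rcases mem_normalizer_or_commute_conj hTM hT g with hg | hg
    · exact ⟨_, hK.conj_mem k hk ⟨_, (mem_normalizer_iff.1 hg t).1 ht⟩, rfl⟩
    · rw [T.subtype_apply, ← (hg k k.2 t ht).eq, mul_inv_cancel_right]
      exact mem_map_of_mem _ hk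
  refine (hT.eq_bot_or_eq ((normal_subgroupOf_iff_le_normalizer hKM).2 hle)
    (comap_mono hKT)).imp (fun hbot => ?_) (fun heq => ?_)
  · rwa [subgroupOf_eq_bot, disjoint_of_le_iff_left_eq_bot hKM,
      map_eq_bot_iff_of_injective _ T.subtype_injective] at hbot
  · have heq' := (subgroupOf_inj.1 heq)
    rw [inf_of_le_left hKM, inf_of_le_left hTM] at heq'
    exact map_injective T.subtype_injective (by rw [heq', ← MonoidHom.range_eq_map, range_subtype])

/-- `T ≅ A₅` is a minimal normal subgroup of the minimal normal subgroup `M` of `G`, so that `M` is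
the direct product of the conjugates of `T`. -/
structure IsA5Component (M T : Subgroup G) : Prop where
  isMinimalNormal : IsMinimalNormal M
  le : T ≤ M
  isMinimalNormal_subgroupOf : IsMinimalNormal (T.subgroupOf M)
  nonempty_mulEquiv : Nonempty (T ≃* A5)

lemma IsA5Component.not_isSolvable {M T : Subgroup G} (h : IsA5Component M T) :
    ¬ Group.IsSolvable G := fun _ =>
  h.nonempty_mulEquiv.elim fun e => not_isSolvable_of_mulEquiv_A5 e inferInstance

lemma IsMinimalNormal.exists_isA5Component [Finite G] (hG : PseudoSolvable G) {M : Subgroup G}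
    (hM : IsMinimalNormal M) (hs : ¬ Group.IsSolvable M) : ∃ T, IsA5Component M T := by
  have := hM.1.1
  have : Nontrivial M := (nontrivial_iff_ne_bot M).2 hM.1.2
  obtain ⟨T', hT'⟩ := exists_isMinimalNormal M
  have hTM := map_subtype_le T'
  have hT : IsMinimalNormal ((T'.map M.subtype).subgroupOf M) := by
    rwa [subgroupOf, comap_map_eq_self_of_injective M.subtype_injective]
  have := hM.isSimpleGroup_of_subgroupOf hTM hT
  have hps : PseudoSolvable ↥(T'.map M.subtype) := by
    have := hT'.1.1
    exact ((hG.subgroup M).subgroup T').of_mulEquiv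
      (equivMapOfInjective T' _ M.subtype_injective)
  refine ⟨_, hM, hTM, hT, (hps.isSolvable_or_mulEquiv_A5 this).resolve_left fun hsolv => hs ?_⟩
  exact hM.isSolvable_of_subgroupOf hT

lemma IsA5Component.not_dvd_natCard [Finite G] {M T : Subgroup G} (h : IsA5Component M T) {q : ℕ}
    (hq : q.Prime) (hq' : q ∉ ({2, 3, 5} : Set ℕ)) : ¬ q ∣ Nat.card M := by
  intro hd
  have := h.isMinimalNormal.1.1
  obtain ⟨e⟩ := h.nonempty_mulEquiv
  obtain ⟨⟨g, hgM⟩, hg⟩ := exists_orderOf_eq_of_prime_dvd hq hd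
  rw [orderOf_mk] at hg
  have hTM := (normal_subgroupOf_iff_le_normalizer h.le).1 h.isMinimalNormal_subgroupOf.1.1
  have hT : T ≠ ⊥ := fun hbot => h.isMinimalNormal_subgroupOf.1.2 (by rw [hbot, bot_subgroupOf])
  have hcent : M ≤ centralizer {g} := by
    refine h.isMinimalNormal.le_of_forall_conj_mem h.le hT fun k t ht => ?_
    have hmem : k⁻¹ * g * k ∈ M := by
      simpa using h.isMinimalNormal.1.1.conj_mem g hgM k⁻¹
    have hord : orderOf (k⁻¹ * g * k) = q := by
      simpa [hg] using (MulAut.conj k⁻¹).orderOf_eq g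
    have hcomm := (commute_of_mem_normalizer_of_mulEquiv_A5 e hq hq' hord (hTM hmem) ht).map
      (MulAut.conj k)
    rw [mem_centralizer_singleton_iff]
    simpa [mul_assoc] using hcomm.eq.symm
  have hcenter : (⟨g, hgM⟩ : M) ∈ center M := mem_center_iff.2 fun x =>
    Subtype.ext (mem_centralizer_singleton_iff.1 (hcent x.2))
  rcases h.isMinimalNormal.eq_bot_or_eq_top_of_characteristic (center M) with hbot | htop
  · rw [hbot, mem_bot, mk_eq_one] at hcenter
    exact ne_one_of_orderOf_prime hq hg hcenter
  · have hs : Group.IsSolvable M := Group.isSolvable_of_comm fun a b =>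
      mem_center_iff.1 (htop ▸ mem_top b : b ∈ center M) a
    exact not_isSolvable_of_mulEquiv_A5 e (isSolvable_of_le h.le)

lemma exists_mul_pow_eq_mul_mul_pow {T : Subgroup G} {x g : G} {n : ℕ}
    (h : ∀ k, 0 < k → k < n → ∀ t ∈ T, Commute t (g ^ k * x * (g ^ k)⁻¹)) {k : ℕ} (hk : k < n) :
    ∃ d ∈ centralizer (T : Set G), (x * g) ^ (k + 1) = x * d * g ^ (k + 1) := by
  induction k with
  | zero => exact ⟨1, one_mem _, by simp⟩
  | succ k ih =>
    obtain ⟨d, hd, hpow⟩ := ih (by omega)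
    refine ⟨d * (g ^ (k + 1) * x * (g ^ (k + 1))⁻¹), mul_mem hd fun t ht => ?_, ?_⟩
    · exact h (k + 1) k.succ_pos hk t ht
    · rw [pow_succ, hpow, pow_succ g (k + 1)]
      group

lemma orderOf_dvd_orderOf_mul_of_mem_centralizer {T : Subgroup G} (hT : center T = ⊥) {x d : G}
    (hx : x ∈ T) (hd : d ∈ centralizer (T : Set G)) : orderOf x ∣ orderOf (x * d) := by
  refine orderOf_dvd_of_pow_eq_one ?_
  have hpow : x ^ orderOf (x * d) * d ^ orderOf (x * d) = 1 := by
    rw [← (show Commute x d from hd x hx).mul_pow, pow_orderOf_eq_one]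
  have hcenter : (⟨x, hx⟩ ^ orderOf (x * d) : T) ∈ center T := mem_center_iff.2 fun t =>
    Subtype.ext <| by
      have hcomm : Commute (t : G) d := hd t t.2
      simpa [eq_inv_of_mul_eq_one_left hpow] using (hcomm.pow_right (orderOf (x * d))).inv_right.eq
  rw [hT, mem_bot] at hcenter
  exact congrArg Subtype.val hcenter

lemma IsA5Component.hasOrder_of_notMem [Finite G] {M T : Subgroup G} (h : IsA5Component M T)
    {p q : ℕ} (hp : p ∈ ({2, 3, 5} : Set ℕ)) (hq : q.Prime) (hq' : q ∉ ({2, 3, 5} : Set ℕ))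
    (hd : q ∣ Nat.card G) : HasOrder G (p * q) := by
  have := h.isMinimalNormal.1.1
  have hpp := prime_of_mem_two_three_five hp
  have hne : p ≠ q := fun heq => hq' (heq ▸ hp)
  obtain ⟨e⟩ := h.nonempty_mulEquiv
  obtain ⟨g, hg⟩ := exists_orderOf_eq_of_prime_dvd hq hd
  obtain ⟨x, hx, hxp⟩ := exists_orderOf_eq_of_mulEquiv_A5 e hp
  by_cases hgT : g ∈ normalizer (T : Set G)
  · exact .of_commute hpp hq hne hxp hg
      (commute_of_mem_normalizer_of_mulEquiv_A5 e hq hq' hg hgT hx).symm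
  -- If `g` moves `T`, then `(x * g) ^ q` is the product of `x` and an element centralizing `T`.
  have hconj : ∀ k, 0 < k → k < q → ∀ t ∈ T, Commute t (g ^ k * x * (g ^ k)⁻¹) := by
    intro k hk hkq
    refine fun t ht => (mem_normalizer_or_commute_conj h.le h.isMinimalNormal_subgroupOf
      (g ^ k)).resolve_left (fun hmem => hgT ?_) t ht x hx
    obtain ⟨m, hm⟩ := exists_pow_eq_self_of_coprime
      (hg ▸ (Nat.coprime_of_lt_prime hk.ne' hkq hq).symm : Nat.Coprime k (orderOf g))
    exact hm ▸ pow_mem hmem m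
  obtain ⟨d, hd, hpow⟩ := exists_mul_pow_eq_mul_mul_pow hconj (Nat.sub_lt hq.pos one_pos)
  rw [Nat.sub_add_cancel hq.one_lt.le, ← hg, pow_orderOf_eq_one, mul_one, hg] at hpow
  have hpdvd : p ∣ orderOf (x * g) := by
    have hdvd := orderOf_dvd_orderOf_mul_of_mem_centralizer (center_eq_bot_of_mulEquiv_A5 e) hx hd
    rw [hxp, ← hpow] at hdvd
    exact hdvd.trans (orderOf_pow_dvd q)
  have hqdvd : q ∣ orderOf (x * g) := by
    have hx1 : QuotientGroup.mk' M x = 1 := (QuotientGroup.eq_one_iff x).2 (h.le hx)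
    have hmap : orderOf (QuotientGroup.mk' M g) = q := orderOf_map_of_prime hq hg fun hg1 =>
      h.not_dvd_natCard hq hq' (dvd_natCard_of_mem ((QuotientGroup.eq_one_iff g).1 hg1) hg)
    rw [← hmap, ← one_mul (QuotientGroup.mk' M g), ← hx1, ← map_mul]
    exact orderOf_map_dvd _ _
  exact .of_dvd_orderOf (Nat.Coprime.mul_dvd_of_dvd_of_dvd ((Nat.coprime_primes hpp hq).2 hne)
    hpdvd hqdvd)

lemma IsA5Component.hasOrder_of_not_pRankLEOne [Finite G] {M T : Subgroup G}
    (h : IsA5Component M T) {p q : ℕ} (hp : p = 3 ∨ p = 5) (hq : q ∈ ({2, 3, 5} : Set ℕ))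
    (hne : p ≠ q) (hrank : ¬ PRankLEOne p G) : HasOrder G (p * q) := by
  have := h.isMinimalNormal.1.1
  have hpp := prime_of_mem_two_three_five (Or.inr hp)
  have hqq := prime_of_mem_two_three_five hq
  obtain ⟨e⟩ := h.nonempty_mulEquiv
  obtain ⟨x, hx, hxp⟩ := exists_orderOf_eq_of_mulEquiv_A5 e (Or.inr hp)
  obtain ⟨y, hy, hyq⟩ := exists_orderOf_eq_of_mulEquiv_A5 e hq
  by_cases hT : ∀ g, g ∈ normalizer (T : Set G)
  · have hnormal : T.Normal := normalizer_eq_top_iff.1 (eq_top_iff.2 fun g _ => hT g)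
    let f : G →* MulAut T := MulAut.conjNormal
    have hf : PRankLEOne p (MulAut T) := .of_sq_not_dvd hpp fun hd => by
      have := hd.trans (natCard_mulAut_dvd e)
      rcases hp with rfl | rfl <;> omega
    obtain ⟨g, hg, hgp, hg1⟩ : ∃ g, f g = 1 ∧ g ^ p = 1 ∧ g ≠ 1 := by
      by_contra! hcon
      exact hrank (hf.of_hom hpp f hcon)
    refine .of_commute hpp hqq hne (orderOf_eq_of_prime hpp hgp hg1) hyq ?_
    have hfix : g * y * g⁻¹ = y := congrArg (fun φ : MulAut T => (φ ⟨y, hy⟩ : G)) hg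
    exact mul_inv_eq_iff_eq_mul.1 hfix
  · obtain ⟨g, hg⟩ := not_forall.1 hT
    have hcomm := (mem_normalizer_or_commute_conj h.le h.isMinimalNormal_subgroupOf g).resolve_left
      hg x hx y hy
    exact .of_commute hpp hqq hne hxp (((MulAut.conj g).orderOf_eq y).trans hyq) hcomm

end A5Component

section ElementsOfComposedOrder

open Subgroup

variable {G : Type u} [Group G] [Finite G]

lemma PseudoSolvable.exists_chief_factor_of_primes (hG : PseudoSolvable G) {X : Set ℕ}
    (hX : ∀ p ∈ X, p.Prime) (hd : ∃ p ∈ X, p ∣ Nat.card G) :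
    ∃ (N : Subgroup G) (_ : N.Normal) (M : Subgroup (G ⧸ N)), (∀ p ∈ X, ¬ p ∣ Nat.card N) ∧
      (((∃ T, IsA5Component M T) ∧ ∃ p ∈ X, p ∈ ({2, 3, 5} : Set ℕ)) ∨
        ∃ p ∈ X, IsNormalElementaryAbelian p M) := by
  obtain ⟨N, hN, M, hXN, hM, p, hp, hpM, hVM⟩ := _root_.exists_chief_factor_of_primes hX hd
  refine ⟨N, hN, M, hXN, ?_⟩
  by_cases hs : Group.IsSolvable M
  · exact Or.inr ⟨p, hp, hVM hs⟩
  · obtain ⟨T, hT⟩ := hM.exists_isA5Component (hG.quotient N) hs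
    exact Or.inl ⟨⟨T, hT⟩, p, hp, by_contra fun hp' => hT.not_dvd_natCard (hX p hp) hp' hpM⟩

lemma IsA5Component.hasOrder_of_not_pRankLEOne_both {M T : Subgroup G} (h : IsA5Component M T)
    {p q : ℕ} (hp : p ∈ ({2, 3, 5} : Set ℕ)) (hq : q.Prime) (hpq : p ≠ q) (hd : q ∣ Nat.card G)
    (hprank : ¬ PRankLEOne p G) (hqrank : ¬ PRankLEOne q G) : HasOrder G (p * q) := by
  by_cases hq' : q ∈ ({2, 3, 5} : Set ℕ)
  · rcases hp with rfl | hp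
    · exact (h.hasOrder_of_not_pRankLEOne (hq'.resolve_left hpq.symm) (Or.inl rfl) hpq.symm
        hqrank).swap
    · exact h.hasOrder_of_not_pRankLEOne hp hq' hpq hprank
  · exact h.hasOrder_of_notMem hp hq hq' hd

lemma PRankLEOne.of_not_dvd {p : ℕ} (hp : p.Prime) (h : ¬ p ∣ Nat.card G) : PRankLEOne p G :=
  .of_sq_not_dvd hp fun hd => h ((dvd_pow_self p two_ne_zero).trans hd)

namespace PseudoSolvable

lemma hasOrder_of_not_pRankLEOne (hG : PseudoSolvable G) {p q : ℕ} (hp : p.Prime)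
    (hq : q.Prime) (hpq : p ≠ q) (hprank : ¬ PRankLEOne p G) (hqrank : ¬ PRankLEOne q G) :
    HasOrder G (p * q) := by
  by_contra hno
  have hpd : p ∣ Nat.card G := by_contra fun h => hprank (.of_not_dvd hp h)
  have hqd : q ∣ Nat.card G := by_contra fun h => hqrank (.of_not_dvd hq h)
  obtain ⟨N, hN, M, hXN, hM⟩ := hG.exists_chief_factor_of_primes (X := {p, q})
    (by rintro x (rfl | rfl) <;> assumption) ⟨p, Or.inl rfl, hpd⟩
  have hpN := hXN p (Or.inl rfl)
  have hqN := hXN q (Or.inr rfl)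
  have hprank' : ¬ PRankLEOne p (G ⧸ N) := fun h => hprank (h.of_quotient hp hpN)
  have hqrank' : ¬ PRankLEOne q (G ⧸ N) := fun h => hqrank (h.of_quotient hq hqN)
  have hno' : ¬ HasOrder (G ⧸ N) (p * q) := fun h => hno h.of_quotient
  rcases hM with ⟨⟨T, hT⟩, s, rfl | rfl, hs⟩ | ⟨s, rfl | rfl, hV⟩
  · exact hno' (hT.hasOrder_of_not_pRankLEOne_both hs hq hpq (dvd_natCard_quotient hq N hqd hqN)
      hprank' hqrank')
  · exact hno' (hT.hasOrder_of_not_pRankLEOne_both hs hp hpq.symm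
      (dvd_natCard_quotient hp N hpd hpN) hqrank' hprank').swap
  · exact hqrank' (hV.pRankLEOne hp hq hpq hno')
  · exact hprank' (hV.pRankLEOne hq hp hpq.symm fun h => hno' h.swap)

omit [Finite G] in
lemma not_isSolvable_quotient {R : Subgroup G} [R.Normal] (hR : Group.IsSolvable R)
    (hs : ¬ Group.IsSolvable G) : ¬ Group.IsSolvable (G ⧸ R) :=
  fun h => hs (isSolvable_of_normal_of_quotient R hR h)

lemma exists_isA5Component_quotient_solvableRadical (hG : PseudoSolvable G)
    (hs : ¬ Group.IsSolvable G) : ∃ M T : Subgroup (G ⧸ solvableRadical G), IsA5Component M T := by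
  have hs' := not_isSolvable_quotient (R := solvableRadical G) inferInstance hs
  have : Nontrivial (G ⧸ solvableRadical G) := not_subsingleton_iff_nontrivial.1 fun _ =>
    hs' (Group.isSolvable_of_comm fun a b => Subsingleton.elim _ _)
  obtain ⟨M, hM⟩ := exists_isMinimalNormal (G ⧸ solvableRadical G)
  exact ⟨M, hM.exists_isA5Component (hG.quotient _) fun h =>
    hM.1.2 (eq_bot_of_quotient_solvableRadical hM.1.1 h)⟩

lemma hasOrder_of_dvd_natCard_solvableRadical (hG : PseudoSolvable G) (hs : ¬ Group.IsSolvable G)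
    {p q : ℕ} (hp : p.Prime) (hq : q ∈ ({2, 3, 5} : Set ℕ)) (hpq : p ≠ q)
    (hrank : PRankLEOne p G) (hd : p ∣ Nat.card (solvableRadical G)) : HasOrder G (p * q) :=
  hrank.hasOrder_of_dvd_commutator_quotient hp (prime_of_mem_two_three_five hq) hpq _ hd
    ((hG.quotient _).dvd_natCard_commutator (not_isSolvable_quotient inferInstance hs) hq)

lemma hasOrder_of_pRankLEOne_of_notMem (hG : PseudoSolvable G) (hs : ¬ Group.IsSolvable G)
    {p r : ℕ} (hp : p ∈ ({2, 3, 5} : Set ℕ)) (hr : r.Prime) (hr' : r ∉ ({2, 3, 5} : Set ℕ))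
    (hd : r ∣ Nat.card G) (hrank : PRankLEOne r G) : HasOrder G (p * r) := by
  by_cases hrR : r ∣ Nat.card (solvableRadical G)
  · exact (hG.hasOrder_of_dvd_natCard_solvableRadical hs hr hp (fun h => hr' (h ▸ hp)) hrank
      hrR).swap
  · obtain ⟨M, T, hT⟩ := hG.exists_isA5Component_quotient_solvableRadical hs
    exact (hT.hasOrder_of_notMem hp hr hr' (dvd_natCard_quotient hr _ hd hrR)).of_quotient

lemma pRankLEOne_of_not_hasOrder (hG : PseudoSolvable G) (hs : ¬ Group.IsSolvable G) {p r : ℕ}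
    (hp : p ∈ ({2, 3, 5} : Set ℕ)) (hr : r.Prime) (hr' : r ∉ ({2, 3, 5} : Set ℕ))
    (hd : r ∣ Nat.card G) (hno : ¬ HasOrder G (p * r)) : PRankLEOne p G := by
  by_contra hprank
  exact hno (hG.hasOrder_of_not_pRankLEOne (prime_of_mem_two_three_five hp) hr
    (fun h => hr' (h ▸ hp)) hprank
    fun hrank => hno (hG.hasOrder_of_pRankLEOne_of_notMem hs hp hr hr' hd hrank))

lemma hasOrder_of_pRankLEOne_of_dvd_commutator (hG : PseudoSolvable G) {p q : ℕ} (hp : p.Prime)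
    (hq : q.Prime) (hpq : p ≠ q) (hprank : PRankLEOne p G) (hqrank : PRankLEOne q G)
    (hpd : p ∣ Nat.card (commutator G)) (hqd : q ∣ Nat.card (commutator G))
    (h : Group.IsSolvable G ∨ p ∉ ({2, 3, 5} : Set ℕ)) : HasOrder G (p * q) := by
  obtain ⟨N, hN, M, hXN, hM⟩ := hG.exists_chief_factor_of_primes (X := {p})
    (by rintro x rfl; assumption) ⟨p, rfl, hpd.trans (card_subgroup_dvd_card _)⟩
  have hpN := hXN p rfl
  by_cases hqN : q ∣ Nat.card N
  · exact (hqrank.hasOrder_of_dvd_commutator_quotient hq hp hpq.symm N hqN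
      (dvd_natCard_commutator_quotient hp N hpN hpd)).swap
  rcases hM with ⟨⟨T, hT⟩, s, rfl, hs⟩ | ⟨s, rfl, hV⟩
  · have := h.resolve_right (not_not.2 hs)
    exact (hT.not_isSolvable inferInstance).elim
  · have := hV.normal
    refine hprank.hasOrder_of_dvd_commutator_quotient hp hq hpq
      (M.comap (QuotientGroup.mk' N)) ?_ (dvd_natCard_commutator_quotient hq _ ?_ hqd)
    · exact natCard_comap_mk' N M ▸ (hV.dvd_natCard hp).mul_left _
    · rw [natCard_comap_mk', hq.dvd_mul, not_or]
      exact ⟨hqN, hV.not_dvd_natCard hp hq hpq.symm⟩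

end PseudoSolvable

end ElementsOfComposedOrder

section LiftingSubgroups

open Subgroup

variable {G : Type u} [Group G] [Finite G]

-- Frattini's argument for a Sylow subgroup of the preimage of `Q`.
lemma exists_isPGroup_map_eq {H : Type*} [Group H] {p : ℕ} (hp : p.Prime) {f : G →* H}
    (hf : Function.Surjective f) {Q : Subgroup H} (hQ : IsPGroup p Q) :
    ∃ S : Subgroup G, IsPGroup p S ∧ S.map f = Q ∧
      ∀ y ∈ normalizer (Q : Set H), ∃ g ∈ normalizer (S : Set G), f g = y := by
  have := Fact.mk hp
  let A : Subgroup G := Q.comap f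
  obtain ⟨P⟩ : Nonempty (Sylow p A) := inferInstance
  let S : Subgroup G := (P : Subgroup A).map A.subtype
  have hSQ : S.map f = Q := by
    refine le_antisymm (map_le_iff_le_comap.2 (map_subtype_le _)) fun y hy => ?_
    let φ : A →* Q := f.subgroupComap Q
    have hφ : Function.Surjective φ := f.subgroupComap_surjective_of_surjective Q hf
    have htop : (P.mapSurjective hφ : Subgroup Q) = ⊤ :=
      ((P.mapSurjective hφ).is_maximal' (hQ.of_equiv topEquiv.symm) le_top).symm
    have hmem : (⟨y, hy⟩ : Q) ∈ (P.mapSurjective hφ : Subgroup Q) := htop ▸ mem_top _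
    obtain ⟨x, hx, hxy⟩ := hmem
    exact ⟨x, ⟨x, hx, rfl⟩, congrArg Subtype.val hxy⟩
  refine ⟨S, P.2.map _, hSQ, fun y hy => ?_⟩
  obtain ⟨g, rfl⟩ := hf y
  have hg : g ∈ normalizer (A : Set G) := mem_normalizer_iff.2 fun x => by
    simpa [A] using mem_normalizer_iff.1 hy (f x)
  obtain ⟨a, ha⟩ := MulAction.exists_smul_eq A (A.normalizerMonoidHom ⟨g, hg⟩ • P) P
  have hag : (a : G) * g ∈ normalizer (S : Set G) := by
    refine mem_normalizer_fintype ?_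
    rintro _ ⟨x, hx, rfl⟩
    have hmem : a * A.normalizerMonoidHom ⟨g, hg⟩ x * a⁻¹ ∈ P := ha ▸ ⟨_, ⟨x, hx, rfl⟩, rfl⟩
    exact ⟨_, hmem, by simp [mul_assoc]⟩
  obtain ⟨s, hs, hsa⟩ : f a ∈ S.map f := hSQ ▸ a.2
  exact ⟨s⁻¹ * (a * g), mul_mem (inv_mem (le_normalizer hs)) hag, by simp [hsa]⟩

lemma PRankLEOne.quotient {p : ℕ} (hp : p.Prime) (hr : PRankLEOne p G) {N : Subgroup G}
    [N.Normal] (hN : ¬ p ∣ Nat.card N) : PRankLEOne p (G ⧸ N) := by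
  intro a b ha hb hab
  obtain ⟨S, hS, hSQ, -⟩ := exists_isPGroup_map_eq hp (QuotientGroup.mk'_surjective N)
    (isPGroup_zpowers_sup_zpowers hab (ha ▸ pow_orderOf_eq_one a) (hb ▸ pow_orderOf_eq_one b))
  have := Fact.mk hp
  obtain ⟨k, hk⟩ := IsPGroup.iff_card.1 hS
  have hdisj : Disjoint S N := disjoint_of_coprime_natCard
    (hk ▸ ((hp.coprime_iff_not_dvd.2 hN).pow_left k))
  let f : S →* G ⧸ N := (QuotientGroup.mk' N).comp S.subtype
  have hf : Function.Injective f := (injective_iff_map_eq_one f).2 fun s hs =>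
    Subtype.ext (disjoint_def.1 hdisj s.2 ((QuotientGroup.eq_one_iff (s : G)).1 hs))
  have hrange : f.range = zpowers a ⊔ zpowers b := by
    rw [MonoidHom.range_comp, range_subtype, hSQ]
  obtain ⟨x, rfl⟩ : a ∈ f.range := hrange ▸ mem_sup_left (mem_zpowers a)
  obtain ⟨y, rfl⟩ : b ∈ f.range := hrange ▸ mem_sup_right (mem_zpowers b)
  rw [orderOf_injective f hf] at ha hb
  obtain ⟨n, rfl⟩ := hr.subgroup hp S x y ha hb (hab.of_map hf)
  exact ⟨n, (map_zpow f x n).symm⟩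

end LiftingSubgroups

lemma eq_of_mem_zpowers_of_orderOf_eq_two {G : Type*} [Group G] {x y : G} (hx : orderOf x = 2)
    (hy : orderOf y = 2) (h : x ∈ Subgroup.zpowers y) : x = y := by
  obtain ⟨n, rfl⟩ := h
  have hy2 : y ^ (2 : ℤ) = 1 := mod_cast hy ▸ pow_orderOf_eq_one y
  obtain ⟨k, rfl | rfl⟩ := Int.even_or_odd' n
  · exact absurd (by simp [zpow_mul, hy2]) (ne_one_of_orderOf_prime Nat.prime_two hx)
  · simp [zpow_add, zpow_mul, hy2]

lemma A5.not_pRankLEOne_two : ¬ PRankLEOne 2 A5 := fun h => by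
  have orderOf_v₁ : orderOf A5.v₁ = 2 :=
    orderOf_eq_of_prime Nat.prime_two (by decide) (by decide)
  have orderOf_v₂ : orderOf A5.v₂ = 2 :=
    orderOf_eq_of_prime Nat.prime_two (by decide) (by decide)
  have hcomm : A5.v₁ * A5.v₂ = A5.v₂ * A5.v₁ := by decide
  exact absurd (eq_of_mem_zpowers_of_orderOf_eq_two orderOf_v₂ orderOf_v₁
    (h _ _ orderOf_v₁ orderOf_v₂ hcomm)) (by decide)

namespace PseudoSolvable

open Subgroup
open scoped commutatorElement

variable {G : Type u} [Group G] [Finite G]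

lemma exists_injective_quotient_solvableRadical (hG : PseudoSolvable G)
    (hs : ¬ Group.IsSolvable G) : ∃ ι : A5 →* G ⧸ solvableRadical G, Function.Injective ι := by
  obtain ⟨_, T, hT⟩ := hG.exists_isA5Component_quotient_solvableRadical hs
  obtain ⟨e⟩ := hT.nonempty_mulEquiv
  exact ⟨T.subtype.comp e.symm.toMonoidHom, T.subtype_injective.comp e.symm.injective⟩

lemma two_dvd_natCard_solvableRadical (hG : PseudoSolvable G) (hs : ¬ Group.IsSolvable G)
    (hr : PRankLEOne 2 G) : 2 ∣ Nat.card (solvableRadical G) := by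
  by_contra hd
  obtain ⟨ι, hι⟩ := hG.exists_injective_quotient_solvableRadical hs
  exact A5.not_pRankLEOne_two ((hr.quotient Nat.prime_two hd).of_injective Nat.prime_two hι)

lemma centralizer_sup_solvableRadical_eq_top (hG : PseudoSolvable G) (hs : ¬ Group.IsSolvable G)
    (hr : PRankLEOne 2 G) {t : G} (ht : orderOf t = 2) :
    centralizer {t} ⊔ solvableRadical G = ⊤ := by
  rw [eq_top_iff, ← hr.normalizer_zpowers_sup_eq_top Nat.prime_two ht (solvableRadical G)
    (hG.two_dvd_natCard_solvableRadical hs hr)]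
  refine sup_le_sup_right (fun n hn => mem_centralizer_singleton_iff.2 ?_) _
  have hnt : orderOf (n * t * n⁻¹) = 2 := ht ▸ (MulAut.conj n).orderOf_eq t
  exact mul_inv_eq_iff_eq_mul.1 (eq_of_mem_zpowers_of_orderOf_eq_two hnt ht
    ((mem_normalizer_iff.1 hn t).1 (mem_zpowers t)))

-- Lift the Klein four-group of `A₅` and a 3-cycle normalizing it.
lemma exists_isPGroup_two_commutatorElement_notMem (hG : PseudoSolvable G)
    (hs : ¬ Group.IsSolvable G) : ∃ S : Subgroup G, IsPGroup 2 S ∧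
      ∃ h ∈ normalizer (S : Set G), (∃ k, orderOf h = 3 ^ k) ∧ h ^ 3 ∈ solvableRadical G ∧
        ∃ s ∈ S, ⁅h, s⁆ ∉ solvableRadical G := by
  obtain ⟨ι, hι⟩ := hG.exists_injective_quotient_solvableRadical hs
  let π := QuotientGroup.mk' (solvableRadical G)
  have mem_iff (g : G) : g ∈ solvableRadical G ↔ π g = 1 := (QuotientGroup.eq_one_iff g).symm
  have hV : IsPGroup 2 A5.kleinFour := .of_card (n := 2) A5.natCard_kleinFour
  obtain ⟨S, hS, hSV, hnorm⟩ := exists_isPGroup_map_eq Nat.prime_two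
    (QuotientGroup.mk'_surjective (solvableRadical G)) (hV.map ι)
  obtain ⟨g, hg, hgc⟩ := hnorm (ι A5.threeCycle)
    (le_normalizer_map ι (mem_map_of_mem ι A5.threeCycle_mem_normalizer_kleinFour))
  have hgo : orderOf (π g) = 3 := by
    rw [hgc, orderOf_injective ι hι, A5.orderOf_threeCycle]
  obtain ⟨m, k, hm, hk⟩ := exists_orderOf_pow_eq_prime_pow g Nat.prime_three
  have hgm : π (g ^ m) = ι A5.threeCycle := (map_pow_eq_of_modEq hgo hm).trans hgc
  obtain ⟨s, hsS, hsv⟩ : ι A5.v₁ ∈ S.map π :=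
    hSV ▸ mem_map_of_mem ι (A5.mem_kleinFour.2 (Or.inr (Or.inl rfl)))
  refine ⟨S, hS, g ^ m, pow_mem hg m, ⟨k, hk⟩, ?_, s, hsS, ?_⟩
  · rw [mem_iff, map_pow, hgm, ← hgc, ← hgo, pow_orderOf_eq_one]
  · rw [mem_iff, map_commutatorElement, hgm, hsv, ← map_commutatorElement,
      map_eq_one_iff ι hι]
    decide

end PseudoSolvable

section FixedPointFree

open Subgroup

variable {G : Type u} [Group G]

lemma mem_of_commute_mk [Finite G] {S N : Subgroup G} [N.Normal] {h : G}
    (hS : h ∈ normalizer (S : Set G)) (hfree : ∀ s ∈ S, Commute h s → s = 1) {s : G}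
    (hs : s ∈ S) (hc : Commute (h : G ⧸ N) s) : s ∈ N := by
  have hSN : h ∈ normalizer ((S ⊓ N : Subgroup G) : Set G) := mem_normalizer_iff.2 fun x =>
    and_congr (mem_normalizer_iff.1 hS x) (mem_normalizer_iff.1 (normalizer_eq_top (H := N) ▸
      mem_top h) x)
  let φ : S →* S := (S.normalizerMonoidHom ⟨h, hS⟩).toMonoidHom
  let ψ : ↥(S ⊓ N) →* ↥(S ⊓ N) := ((S ⊓ N).normalizerMonoidHom ⟨h, hSN⟩).toMonoidHom
  have hφ : MonoidHom.FixedPointFree φ := fun x hx =>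
    Subtype.ext (hfree x x.2 (mul_inv_eq_iff_eq_mul.1 (congrArg Subtype.val hx)))
  have hψ : MonoidHom.FixedPointFree ψ := fun x hx =>
    Subtype.ext (hfree x x.2.1 (mul_inv_eq_iff_eq_mul.1 (congrArg Subtype.val hx)))
  have hsN : s / (h * s * h⁻¹) ∈ N := by
    rw [← QuotientGroup.eq_one_iff]
    simp [hc.eq]
  obtain ⟨x, hx⟩ := hψ.commutatorMap_surjective
    ⟨_, S.div_mem hs ((mem_normalizer_iff.1 hS s).1 hs), hsN⟩
  have hxs : (⟨x, x.2.1⟩ : S) = ⟨s, hs⟩ :=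
    hφ.commutatorMap_injective (Subtype.ext (congrArg (S ⊓ N).subtype hx))
  have heq : (x : G) = s := congrArg Subtype.val hxs
  exact heq ▸ x.2.2

lemma IsNormalElementaryAbelian.le_comap_centralizer [Finite G] {p q : ℕ} (hp : p.Prime)
    (hq : q.Prime) (hpq : p ≠ q) {N : Subgroup G} [N.Normal] (hqN : ¬ q ∣ Nat.card N)
    {V : Subgroup (G ⧸ N)} (hV : IsNormalElementaryAbelian p V)
    (hno : ¬ HasOrder (G ⧸ N) (p * q)) {S : Subgroup G} (hpS : ¬ p ∣ Nat.card S) {h : G}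
    (hh : orderOf h = q) (hS : h ∈ normalizer (S : Set G))
    (hfree : ∀ s ∈ S, Commute h s → s = 1) :
    S ≤ (centralizer (V : Set (G ⧸ N))).comap (QuotientGroup.mk' N) := by
  rw [← map_le_iff_le_comap]
  intro s hs
  have hhN : orderOf (QuotientGroup.mk' N h) = q := orderOf_map_of_prime hq hh fun h1 =>
    hqN (dvd_natCard_of_mem ((QuotientGroup.eq_one_iff h).1 h1) hh)
  refine mem_centralizer_iff.2 fun v hv => (hV.commute_of_fixedPointFree hp hq hpq hno
    (fun hd => hpS (hd.trans (card_map_dvd _ _))) hhN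
    (le_normalizer_map _ (mem_map_of_mem _ hS)) ?_ hs hv).symm
  rintro _ ⟨s, hs, rfl⟩ hc
  exact (QuotientGroup.eq_one_iff s).2 (mem_of_commute_mk hS hfree hs hc)

lemma not_dvd_sub_one {p r : ℕ} (hp : p ∈ ({2, 3, 5} : Set ℕ)) (hr : r.Prime)
    (hr' : r ∉ ({2, 3, 5} : Set ℕ)) : ¬ r ∣ p - 1 := fun hd => by
  have h4 : r ∣ 2 ^ 2 := hd.trans (by rcases hp with rfl | rfl | rfl <;> norm_num)
  exact hr' (Or.inl ((Nat.prime_dvd_prime_iff_eq hr Nat.prime_two).1 (hr.dvd_of_dvd_pow h4)))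

namespace PseudoSolvable

lemma isSolvable_centralizer_of_not_hasOrder (hG : PseudoSolvable G) [Finite G] {p r : ℕ}
    (hp : p ∈ ({2, 3, 5} : Set ℕ)) (hr : r.Prime) (hpr : p ≠ r) {V : Subgroup G}
    (hV : IsNormalElementaryAbelian r V) (hno : ¬ HasOrder G (p * r)) :
    Group.IsSolvable (centralizer (V : Set G)) := by
  have := hV.normal
  by_contra hs
  obtain ⟨x, hx⟩ := exists_orderOf_eq_of_prime_dvd (prime_of_mem_two_three_five hp)
    ((hG.subgroup (centralizer (V : Set G))).dvd_natCard hs hp)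
  obtain ⟨v, hv, hvr⟩ := hV.exists_orderOf_eq hr
  exact hno (.of_commute (prime_of_mem_two_three_five hp) hr hpr ((orderOf_coe x).trans hx) hvr
    (mem_centralizer_iff.1 x.2 v hv).symm)

lemma le_solvableRadical_of_fixedPointFree [Finite G] (hG : PseudoSolvable G)
    (hs : ¬ Group.IsSolvable G) {p r : ℕ} (hp : p ∈ ({2, 3, 5} : Set ℕ)) (hr : r.Prime)
    (hr' : r ∉ ({2, 3, 5} : Set ℕ)) (hd : r ∣ Nat.card G) (hno : ¬ HasOrder G (p * r))
    {S : Subgroup G} (hrS : ¬ r ∣ Nat.card S) {h : G} (hh : orderOf h = p)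
    (hS : h ∈ normalizer (S : Set G)) (hfree : ∀ s ∈ S, Commute h s → s = 1) :
    S ≤ solvableRadical G := by
  have hp' := prime_of_mem_two_three_five hp
  have hpr : p ≠ r := fun h => hr' (h ▸ hp)
  obtain ⟨N, hN, M, hXN, ⟨⟨T, hT⟩, -⟩ | ⟨q, rfl | rfl, hV⟩⟩ :=
    hG.exists_chief_factor_of_primes (X := {p, r}) (by rintro x (rfl | rfl) <;> assumption)
      ⟨r, Or.inr rfl, hd⟩
  · exact absurd (hT.hasOrder_of_notMem hp hr hr' (dvd_natCard_quotient hr N hd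
      (hXN r (Or.inr rfl)))).of_quotient hno
  · have := hV.normal
    have hrank := hG.pRankLEOne_of_not_hasOrder hs hp hr hr' hd hno
    refine absurd (hrank.hasOrder_of_dvd_natCard_quotient hp' hr hpr
      (M.comap (QuotientGroup.mk' N)) ?_ (dvd_natCard_quotient hr _ hd ?_)
      (not_dvd_sub_one hp hr hr')) hno
    · exact natCard_comap_mk' N M ▸ (hV.dvd_natCard hp').mul_left _
    · rw [natCard_comap_mk', hr.dvd_mul]
      exact not_or.2 ⟨hXN r (Or.inr rfl), hV.not_dvd_natCard hp' hr hpr.symm⟩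
  · have := hV.normal
    have hno' : ¬ HasOrder (G ⧸ N) (p * q) := fun h => hno h.of_quotient
    have hNs : Group.IsSolvable N := by
      by_contra hNs
      exact hXN p (Or.inl rfl) ((hG.subgroup N).dvd_natCard hNs hp)
    have hCs := isSolvable_comap_mk' N hNs _
      ((hG.quotient N).isSolvable_centralizer_of_not_hasOrder hp hr hpr hV hno')
    exact (hV.le_comap_centralizer hr hp' hpr.symm (hXN p (Or.inl rfl)) (fun h => hno' h.swap)
      hrS hh hS hfree).trans (le_solvableRadical inferInstance hCs)

end PseudoSolvable

end FixedPointFree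

section CompAdj

open Subgroup

variable {G : Type u} [Group G] {p q r : ℕ}

lemma CompAdj.symm (h : CompAdj G p q) : CompAdj G q p :=
  ⟨h.2.1, h.1, h.2.2.1.symm, h.2.2.2.2.1, h.2.2.2.1, fun h' => h.2.2.2.2.2 (HasOrder.swap h')⟩

lemma CompAdj.not_hasOrder (h : CompAdj G p q) : ¬ HasOrder G (p * q) := h.2.2.2.2.2

lemma CompAdj.quotient [Finite G] (h : CompAdj G p q) {N : Subgroup G} [N.Normal]
    (hp : ¬ p ∣ Nat.card N) (hq : ¬ q ∣ Nat.card N) : CompAdj (G ⧸ N) p q :=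
  ⟨h.1, h.2.1, h.2.2.1, dvd_natCard_quotient h.1 N h.2.2.2.1 hp,
    dvd_natCard_quotient h.2.1 N h.2.2.2.2.1 hq, fun h' => h.not_hasOrder (.of_quotient h')⟩

open Classical in
lemma CompColorable3.of_classes {P Q : ℕ → Prop}
    (hP : ∀ a b, P a → P b → ¬ CompAdj G a b)
    (hQ : ∀ a b, Q a → Q b → ¬ CompAdj G a b)
    (hPQ : ∀ a b, ¬ P a → ¬ Q a → ¬ P b → ¬ Q b → ¬ CompAdj G a b) : CompColorable3 G := by
  refine ⟨fun a => if P a then 0 else if Q a then 1 else 2, fun a b hab heq => ?_⟩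
  dsimp only at heq
  split_ifs at heq with ha hb hb ha' hb hb' hb hb' <;> try exact absurd heq (by decide)
  · exact hP a b ha hb hab
  · exact hQ a b ha' hb' hab
  · exact hPQ a b ha ha' hb hb' hab

end CompAdj

namespace PseudoSolvable

open Subgroup

variable {G : Type u} [Group G] [Finite G] {p q r : ℕ}

lemma hasOrder_two_mul_of_pRankLEOne (hG : PseudoSolvable G) (hs : ¬ Group.IsSolvable G)
    (hr : PRankLEOne 2 G) (hp : p ∈ ({2, 3, 5} : Set ℕ)) (h2 : 2 ≠ p) : HasOrder G (2 * p) :=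
  hG.hasOrder_of_dvd_natCard_solvableRadical hs Nat.prime_two hp h2 hr
    (hG.two_dvd_natCard_solvableRadical hs hr)

lemma not_isSolvable_and_mem_three_five (hG : PseudoSolvable G) (h : CompAdj G p q)
    (hp : PRankLEOne p G) (hq : PRankLEOne q G) (hpG : p ∣ Nat.card (commutator G))
    (hqG : q ∣ Nat.card (commutator G)) : ¬ Group.IsSolvable G ∧ p ∈ ({3, 5} : Set ℕ) := by
  obtain ⟨hs, hp'⟩ := not_or.1 (mt (hG.hasOrder_of_pRankLEOne_of_dvd_commutator h.1 h.2.1 h.2.2.1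
    hp hq hpG hqG) h.not_hasOrder)
  obtain ⟨-, hq'⟩ := not_or.1 (mt (hG.hasOrder_of_pRankLEOne_of_dvd_commutator h.2.1 h.1
    h.2.2.1.symm hq hp hqG hpG) h.symm.not_hasOrder)
  rw [not_not] at hp' hq'
  refine ⟨hs, hp'.resolve_left ?_⟩
  rintro rfl
  exact h.not_hasOrder (hG.hasOrder_two_mul_of_pRankLEOne hs hp hq' h.2.2.1)

lemma hasOrder_three_mul_of_not_dvd_commutator (hG : PseudoSolvable G)
    (hs : ¬ Group.IsSolvable G) (h3 : PRankLEOne 3 G) (hq : q.Prime) (hqG : q ∣ Nat.card G)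
    (hqG' : ¬ q ∣ Nat.card (commutator G)) : HasOrder G (3 * q) := by
  have dvd_commutator {p : ℕ} (hp : p ∈ ({2, 3, 5} : Set ℕ)) : p ∣ Nat.card (commutator G) :=
    hG.dvd_natCard_commutator hs hp
  have ne_of_mem {p : ℕ} (hp : p ∈ ({2, 3, 5} : Set ℕ)) : p ≠ q := by
    rintro rfl
    exact hqG' (dvd_commutator hp)
  refine h3.hasOrder_of_dvd_natCard_quotient Nat.prime_three hq (ne_of_mem (by simp)) _
    (dvd_commutator (by simp)) (dvd_natCard_quotient hq _ hqG hqG') fun hd => ?_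
  exact ne_of_mem (p := 2) (by simp) ((Nat.prime_dvd_prime_iff_eq hq Nat.prime_two).1 hd).symm

-- Colour by: `p`-rank at least two; rank one with `p ∤ |G'|`, together with `3` when `G` is not
-- solvable; all other primes.
lemma compColorable3 (hG : PseudoSolvable G) : CompColorable3 G := by
  refine .of_classes (P := fun p => ¬ PRankLEOne p G) (Q := fun p => PRankLEOne p G ∧
    (¬ p ∣ Nat.card (commutator G) ∨ ¬ Group.IsSolvable G ∧ p = 3)) ?_ ?_ ?_
  · exact fun a b ha hb h =>
      h.not_hasOrder (hG.hasOrder_of_not_pRankLEOne h.1 h.2.1 h.2.2.1 ha hb)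
  · rintro a b ⟨ha, haG | ⟨hs, rfl⟩⟩ ⟨hb, hbG | ⟨hs, rfl⟩⟩ h
    · exact h.not_hasOrder (hasOrder_of_not_dvd_natCard_commutator h.1 h.2.1 h.2.2.1 h.2.2.2.1
        h.2.2.2.2.1 haG hbG)
    · exact h.symm.not_hasOrder
        (hG.hasOrder_three_mul_of_not_dvd_commutator hs hb h.1 h.2.2.2.1 haG)
    · exact h.not_hasOrder
        (hG.hasOrder_three_mul_of_not_dvd_commutator hs ha h.2.1 h.2.2.2.2.1 hbG)
    · exact h.2.2.1 rfl
  · intro a b ha haQ hb hbQ h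
    rw [not_not] at ha hb
    simp only [ha, hb, true_and, not_or, not_not, not_and] at haQ hbQ
    obtain ⟨hs, ha'⟩ := hG.not_isSolvable_and_mem_three_five h ha hb haQ.1 hbQ.1
    obtain ⟨-, hb'⟩ := hG.not_isSolvable_and_mem_three_five h.symm hb ha hbQ.1 haQ.1
    exact h.2.2.1 ((ha'.resolve_left (haQ.2 hs)).trans (hb'.resolve_left (hbQ.2 hs)).symm)

end PseudoSolvable

section Triangles

open Subgroup

variable {G : Type u} [Group G] [Finite G] {p q r : ℕ}

lemma IsNormalElementaryAbelian.hasOrder_of_dvd_commutator {V : Subgroup G}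
    (hV : IsNormalElementaryAbelian p V) (hpq : CompAdj G p q) (hpr : CompAdj G p r) (hqr : q ≠ r)
    (hqG : q ∣ Nat.card (commutator G)) (hrG : ¬ r ∣ Nat.card (commutator G)) :
    HasOrder G (q * r) := by
  obtain ⟨hp, hq, hpq', -, -, npq⟩ := hpq
  obtain ⟨-, hr, hpr', -, hrd, npr⟩ := hpr
  by_contra hno
  obtain ⟨⟨z, hzG⟩, hz⟩ := exists_orderOf_eq_of_prime_dvd hq hqG
  rw [orderOf_mk] at hz
  have hcz : Nat.card (zpowers z) = q := (Nat.card_zpowers z).trans hz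
  obtain ⟨n, hn, hnr⟩ := exists_mem_orderOf_eq_of_sup_eq_top hr
    ((hV.pRankLEOne hp hq hpq' npq).normalizer_zpowers_sup_eq_top hq hz (commutator G) hqG)
    (dvd_natCard_quotient hr _ hrd hrG)
  obtain ⟨v, hv, hvp⟩ := hV.exists_orderOf_eq hp
  have hpz : ¬ p ∣ Nat.card (zpowers z) := fun hd =>
    hpq' ((Nat.prime_dvd_prime_iff_eq hp hq).1 (hcz ▸ hd))
  have hzv : Commute z v :=
    hV.commute_of_fixedPointFree hp hr hpr' npr hpz hnr hn (fun s hs hns => ?_) (mem_zpowers z) hv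
  · exact npq (HasOrder.of_commute hp hq hpq' hvp hz hzv.symm)
  · by_contra hs1
    have hsq : s ^ q = 1 :=
      orderOf_dvd_iff_pow_eq_one.1 (hcz ▸ orderOf_dvd_natCard (zpowers z) hs)
    exact hno (.of_commute hq hr hqr (orderOf_eq_of_prime hq hsq hs1) hnr hns.symm)

lemma IsNormalElementaryAbelian.not_isSolvable_and_mem_three_five {V : Subgroup G}
    (hG : PseudoSolvable G) (hV : IsNormalElementaryAbelian p V) (hpq : CompAdj G p q)
    (hpr : CompAdj G p r) (hqr : CompAdj G q r) :
    ¬ Group.IsSolvable G ∧ q ∈ ({3, 5} : Set ℕ) ∧ r ∈ ({3, 5} : Set ℕ) := by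
  have hq := hV.pRankLEOne hpq.1 hpq.2.1 hpq.2.2.1 hpq.not_hasOrder
  have hr := hV.pRankLEOne hpr.1 hpr.2.1 hpr.2.2.1 hpr.not_hasOrder
  by_cases hqG : q ∣ Nat.card (commutator G) <;> by_cases hrG : r ∣ Nat.card (commutator G)
  · obtain ⟨hs, hq'⟩ := hG.not_isSolvable_and_mem_three_five hqr hq hr hqG hrG
    exact ⟨hs, hq', (hG.not_isSolvable_and_mem_three_five hqr.symm hr hq hrG hqG).2⟩
  · exact absurd (hV.hasOrder_of_dvd_commutator hpq hpr hqr.2.2.1 hqG hrG) hqr.not_hasOrder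
  · exact absurd (hV.hasOrder_of_dvd_commutator hpr hpq hqr.2.2.1.symm hrG hqG)
      hqr.symm.not_hasOrder
  · exact absurd (hasOrder_of_not_dvd_natCard_commutator hqr.1 hqr.2.1 hqr.2.2.1 hqr.2.2.2.1
      hqr.2.2.2.2.1 hqG hrG) hqr.not_hasOrder

lemma IsA5Component.mem_of_compAdj {M T : Subgroup G} (h : IsA5Component M T)
    (hpq : CompAdj G p q) (hp : p ∈ ({2, 3, 5} : Set ℕ)) : q ∈ ({2, 3, 5} : Set ℕ) := by
  by_contra hq
  exact hpq.not_hasOrder (h.hasOrder_of_notMem hp hpq.2.1 hq hpq.2.2.2.2.1)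

lemma IsA5Component.not_isSolvable_and_three_five_mem {M T : Subgroup G} (h : IsA5Component M T)
    {s : ℕ} (hs : s ∈ ({p, q, r} : Set ℕ)) (hs' : s ∈ ({2, 3, 5} : Set ℕ))
    (hpq : CompAdj G p q) (hpr : CompAdj G p r) (hqr : CompAdj G q r) :
    ¬ Group.IsSolvable G ∧ 3 ∈ ({p, q, r} : Set ℕ) ∧ 5 ∈ ({p, q, r} : Set ℕ) := by
  have hall : p ∈ ({2, 3, 5} : Set ℕ) ∧ q ∈ ({2, 3, 5} : Set ℕ) ∧ r ∈ ({2, 3, 5} : Set ℕ) := by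
    rcases hs with rfl | rfl | rfl
    · exact ⟨hs', h.mem_of_compAdj hpq hs', h.mem_of_compAdj hpr hs'⟩
    · exact ⟨h.mem_of_compAdj hpq.symm hs', hs', h.mem_of_compAdj hqr hs'⟩
    · exact ⟨h.mem_of_compAdj hpr.symm hs', h.mem_of_compAdj hqr.symm hs', hs'⟩
  refine ⟨h.not_isSolvable, ?_⟩
  have npq := hpq.2.2.1
  have npr := hpr.2.2.1
  have nqr := hqr.2.2.1
  simp only [Set.mem_insert_iff, Set.mem_singleton_iff] at hall ⊢
  omega

lemma IsNormalElementaryAbelian.not_isSolvable_and_three_five_mem (hG : PseudoSolvable G) {s : ℕ}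
    {V : Subgroup G} (hV : IsNormalElementaryAbelian s V) (hs : s ∈ ({p, q, r} : Set ℕ))
    (hpq : CompAdj G p q) (hpr : CompAdj G p r) (hqr : CompAdj G q r) :
    ¬ Group.IsSolvable G ∧ 3 ∈ ({p, q, r} : Set ℕ) ∧ 5 ∈ ({p, q, r} : Set ℕ) := by
  have npq := hpq.2.2.1
  have npr := hpr.2.2.1
  have nqr := hqr.2.2.1
  simp only [Set.mem_insert_iff, Set.mem_singleton_iff]
  rcases hs with rfl | rfl | rfl
  · refine (hV.not_isSolvable_and_mem_three_five hG hpq hpr hqr).imp_right fun hmem => ?_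
    simp only [Set.mem_insert_iff, Set.mem_singleton_iff] at hmem
    omega
  · refine (hV.not_isSolvable_and_mem_three_five hG hpq.symm hqr hpr).imp_right fun hmem => ?_
    simp only [Set.mem_insert_iff, Set.mem_singleton_iff] at hmem
    omega
  · refine (hV.not_isSolvable_and_mem_three_five hG hpr.symm hqr.symm hpq).imp_right
      fun hmem => ?_
    simp only [Set.mem_insert_iff, Set.mem_singleton_iff] at hmem
    omega

lemma PseudoSolvable.not_isSolvable_and_three_five_mem_of_triangle (hG : PseudoSolvable G)
    (hpq : CompAdj G p q) (hpr : CompAdj G p r) (hqr : CompAdj G q r) :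
    ¬ Group.IsSolvable G ∧ 3 ∈ ({p, q, r} : Set ℕ) ∧ 5 ∈ ({p, q, r} : Set ℕ) := by
  obtain ⟨N, hN, M, hXN, hM⟩ := hG.exists_chief_factor_of_primes (X := {p, q, r})
    (by rintro x (rfl | rfl | rfl); exacts [hpq.1, hqr.1, hqr.2.1])
    ⟨p, Or.inl rfl, hpq.2.2.2.1⟩
  have hpN := hXN p (by simp)
  have hqN := hXN q (by simp)
  have hrN := hXN r (by simp)
  replace hpq := hpq.quotient hpN hqN
  replace hpr := hpr.quotient hpN hrN
  replace hqr := hqr.quotient hqN hrN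
  suffices h : ¬ Group.IsSolvable (G ⧸ N) ∧ 3 ∈ ({p, q, r} : Set ℕ) ∧ 5 ∈ ({p, q, r} : Set ℕ) from
    ⟨fun _ => h.1 inferInstance, h.2⟩
  rcases hM with ⟨⟨T, hT⟩, s, hs, hs'⟩ | ⟨s, hs, hV⟩
  · exact hT.not_isSolvable_and_three_five_mem hs hs' hpq hpr hqr
  · exact hV.not_isSolvable_and_three_five_mem (hG.quotient N) hs hpq hpr hqr

end Triangles

section AdjacencyToThree

open Subgroup

namespace A5

/-- The 3-cycle `2 ↦ 3 ↦ 4 ↦ 2` in `A₅`. -/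
def threeCycle' : A5 :=
  ⟨Equiv.swap 2 3 * Equiv.swap 3 4, by rw [Equiv.Perm.mem_alternatingGroup]; decide⟩

lemma orderOf_threeCycle' : orderOf threeCycle' = 3 :=
  orderOf_eq_of_prime Nat.prime_three (by decide) (by decide)

lemma orderOf_threeCycle_mul_threeCycle' : orderOf (threeCycle * threeCycle') = 5 :=
  orderOf_eq_of_prime Nat.prime_five (by decide) (by decide)

set_option maxRecDepth 20000 in
lemma orderOf_sq_mul_conj : orderOf ((threeCycle * threeCycle') ^ 2 *
    (threeCycle * (threeCycle * threeCycle') * threeCycle⁻¹)) = 3 :=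
  orderOf_eq_of_prime Nat.prime_three (by decide) (by decide)

end A5

section Ring

variable {A W : Type*} [Ring A] [AddCommGroup W] [Module A W]

lemma mul_mul_mul_self_eq {a b : A} (ha : 1 + a + a ^ 2 = 0) (hb : 1 + b + b ^ 2 = 0) :
    a * b * a * (a * b) = a + a * b - (a * b) ^ 2 := by
  rw [add_comm, add_eq_zero_iff_eq_neg] at ha hb
  calc a * b * a * (a * b) = a * b * a ^ 2 * b := by noncomm_ring
    _ = - (a * b ^ 2) - (a * b) ^ 2 := by rw [ha]; noncomm_ring
    _ = a + a * b - (a * b) ^ 2 := by rw [hb]; noncomm_ring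

lemma exists_commute_pow_mul_eq {g : Aˣ} {a c : A} (hc : Commute (g : A) c)
    (h : g * a = a * ↑g⁻¹ + c) (k : ℕ) :
    ∃ d, Commute (g : A) d ∧ ↑(g ^ k) * a = a * ↑(g ^ k)⁻¹ + d := by
  induction k with
  | zero => exact ⟨0, Commute.zero_right _, by simp⟩
  | succ k ih =>
    obtain ⟨d, hd, hk⟩ := ih
    refine ⟨d * ↑g⁻¹ + ↑(g ^ k) * c, (hd.mul_right (Units.commute_coe_inv g)).add_right
      (((Commute.refl g).pow_right k).units_val.mul_right hc), ?_⟩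
    calc ↑(g ^ (k + 1)) * a = ↑(g ^ k) * (g * a) := by rw [pow_succ, Units.val_mul, mul_assoc]
      _ = (↑(g ^ k) * a) * ↑g⁻¹ + ↑(g ^ k) * c := by rw [h, mul_add, mul_assoc]
      _ = a * ↑(g ^ (k + 1))⁻¹ + (d * ↑g⁻¹ + ↑(g ^ k) * c) := by
        rw [hk, pow_succ', mul_inv_rev, Units.val_mul, add_mul, mul_assoc, add_assoc]

lemma pow_smul_eq_add_nsmul {a : A} {w z : W} (hw : a • w = w + z) (hz : a • z = z) (n : ℕ) :
    a ^ n • w = w + n • z := by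
  induction n with
  | zero => simp
  | succ n ih => rw [pow_succ', mul_smul, ih, smul_add, hw, smul_comm, hz, succ_nsmul']; abel

-- `g ^ k` translates `a • w` by a vector `d • w` that it fixes, so after `n` applications
-- `n • d • w = 0`.
lemma smul_smul_eq_of_mul_eq {g : Aˣ} {a c : A} (hc : Commute (g : A) c)
    (h : g * a = a * ↑g⁻¹ + c) {k n : ℕ} (hn : (g ^ k) ^ n = 1)
    (htors : ∀ z : W, n • z = 0 → z = 0) {w : W} (hw : g ^ k • w = w) :
    g ^ k • a • w = a • w := by
  obtain ⟨d, hd, hk⟩ := exists_commute_pow_mul_eq hc h k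
  have hxa : g ^ k • a • w = a • w + d • w := by
    rw [Units.smul_def, ← mul_smul, hk, add_smul, mul_smul, ← Units.smul_def,
      inv_smul_eq_iff.2 hw.symm]
  have hxd : g ^ k • d • w = d • w := by
    rw [Units.smul_def, ← mul_smul, Units.val_pow_eq_pow_val, (hd.pow_left k).eq, mul_smul,
      ← Units.val_pow_eq_pow_val, ← Units.smul_def, hw]
  have hnd := pow_smul_eq_add_nsmul (a := ((g ^ k : Aˣ) : A)) hxa hxd n
  rw [← Units.val_pow_eq_pow_val, hn, Units.val_one, one_smul, left_eq_add] at hnd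
  rw [hxa, htors _ hnd, add_zero]

end Ring

open scoped IsMulCommutative in
lemma IsNormalElementaryAbelian.commute_conj_of_orderOf_eq_three {G : Type*} [Group G] {r : ℕ}
    (hr : r.Prime) (hr3 : r ≠ 3) {V : Subgroup G} (hV : IsNormalElementaryAbelian r V)
    (hno : ¬ HasOrder G (r * 3)) {a b : G} (ha : orderOf a = 3) (hb : orderOf b = 3) {k n : ℕ}
    (hn : ((a * b) ^ k) ^ n = 1) (hrn : r.Coprime n) {v : G} (hv : v ∈ V)
    (hkv : Commute ((a * b) ^ k) v) : Commute ((a * b) ^ k) (a * v * a⁻¹) := by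
  have := hV.normal
  have := hV.isMulCommutative
  let ρ := conjRep V
  let g := ρ.toHomUnits (a * b)
  have hρ {x : G} (hx : orderOf x = 3) : 1 + ρ x + ρ x ^ 2 = 0 := by
    simpa [Finset.sum_range_succ] using
      sum_conjRep_pow_eq_zero V hr Nat.prime_three hr3 hV.pow_eq_one hno hx
  have hg : (g : AddMonoid.End (Additive V)) = ρ a * ρ b := map_mul ρ a b
  have hga : g * ρ a = ρ a * ↑g⁻¹ + (1 - g) := by
    rw [← Units.mul_left_inj g, add_mul, sub_mul, Units.inv_mul_cancel_right, hg,
      mul_mul_mul_self_eq (hρ ha) (hρ hb), one_mul, sq, add_sub_assoc]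
  refine (conjRep_apply_eq_self_iff V _ ⟨_, hV.normal.conj_mem v hv a⟩).1 ?_
  have hfix := (conjRep_apply_eq_self_iff V _ ⟨v, hv⟩).2 hkv
  have hgk : g ^ k = ρ.toHomUnits ((a * b) ^ k) := (map_pow _ _ _).symm
  have htors (z : Additive V) (hz : n • z = 0) : z = 0 := by
    have hgcd : z.toMul ^ r.gcd n = 1 :=
      pow_gcd_eq_one.2 ⟨Subtype.ext (hV.pow_eq_one _ z.toMul.2), hz⟩
    rwa [hrn.gcd_eq_one, pow_one] at hgcd
  have hsmul := smul_smul_eq_of_mul_eq ((Commute.one_right _).sub_right (Commute.refl _)) hga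
    (by rw [hgk, ← map_pow, hn, map_one]) htors (w := Additive.ofMul (⟨v, hv⟩ : V))
    (by rw [hgk]; exact hfix)
  rw [hgk] at hsmul
  exact hsmul

namespace PseudoSolvable

variable {G : Type u} [Group G] [Finite G]

lemma exists_orderOf_eq_three_five_three (hG : PseudoSolvable G) (hs : ¬ Group.IsSolvable G)
    (h3 : ¬ 3 ∣ Nat.card (solvableRadical G)) (h5 : ¬ 5 ∣ Nat.card (solvableRadical G)) :
    ∃ (a b : G) (k : ℕ), orderOf a = 3 ∧ orderOf b = 3 ∧ orderOf ((a * b) ^ k) = 5 ∧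
      3 ∣ orderOf (((a * b) ^ k) ^ 2 * (a * (a * b) ^ k * a⁻¹)) := by
  obtain ⟨ι, hι⟩ := hG.exists_injective_quotient_solvableRadical hs
  let π := QuotientGroup.mk' (solvableRadical G)
  have hπ : π.ker = solvableRadical G := QuotientGroup.ker_mk' _
  have lift {c : A5} (hc : orderOf c = 3) : ∃ a : G, orderOf a = 3 ∧ π a = ι c :=
    exists_orderOf_eq_and_map_eq (f := π) (QuotientGroup.mk'_surjective _) Nat.prime_three
      ((orderOf_injective ι hι c).trans hc) (hπ.symm ▸ h3)
  obtain ⟨a, ha, hπa⟩ := lift A5.orderOf_threeCycle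
  obtain ⟨b, hb, hπb⟩ := lift A5.orderOf_threeCycle'
  have hπab : π (a * b) = ι (A5.threeCycle * A5.threeCycle') := by rw [map_mul, hπa, hπb, map_mul]
  obtain ⟨k, hk, hπk⟩ := exists_pow_orderOf_eq_and_map_eq (f := π) (g := a * b) Nat.prime_five
    (by rw [hπab, orderOf_injective ι hι, A5.orderOf_threeCycle_mul_threeCycle']) (hπ.symm ▸ h5)
  refine ⟨a, b, k, ha, hb, hk, ?_⟩
  have hdvd := orderOf_map_dvd π (((a * b) ^ k) ^ 2 * (a * (a * b) ^ k * a⁻¹))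
  rwa [map_mul, map_pow, map_mul, map_mul, map_inv, hπk, hπab, hπa, ← map_inv, ← map_mul,
    ← map_mul, ← map_pow, ← map_mul, orderOf_injective ι hι, A5.orderOf_sq_mul_conj] at hdvd

lemma hasOrder_three_mul_of_commute (hG : PseudoSolvable G) (hs : ¬ Group.IsSolvable G) {r : ℕ}
    (hr : r.Prime) (hr' : r ∉ ({2, 3, 5} : Set ℕ)) (h3 : PRankLEOne 3 G) (h5 : PRankLEOne 5 G)
    (h15 : ¬ HasOrder G (3 * 5)) {V : Subgroup G} (hV : IsNormalElementaryAbelian r V) {x v : G}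
    (hx : orderOf x = 5) (hv : v ∈ V) (hvr : orderOf v = r) (hxv : Commute x v) :
    HasOrder G (3 * r) := by
  by_contra hno
  have hr3 : r ≠ 3 := fun h => hr' (by simp [h])
  have hr5 : r ≠ 5 := fun h => hr' (by simp [h])
  obtain ⟨a, b, k, ha, hb, hk, hc⟩ := hG.exists_orderOf_eq_three_five_three hs
    (fun hd => h15 (hG.hasOrder_of_dvd_natCard_solvableRadical hs Nat.prime_three (by simp)
      (by simp) h3 hd))
    (fun hd => h15 (hG.hasOrder_of_dvd_natCard_solvableRadical hs Nat.prime_five (q := 3)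
      (by simp) (by simp) h5 hd).swap)
  have commute_conj {v : G} := hV.commute_conj_of_orderOf_eq_three hr hr3 (mt .swap hno) ha hb
    (hk ▸ pow_orderOf_eq_one _) ((Nat.coprime_primes hr Nat.prime_five).2 hr5) (v := v)
  set y := (a * b) ^ k
  obtain ⟨g, hg⟩ := h5.exists_conj_mem_zpowers Nat.prime_five hk hx
  have conj_mem {w : G} (hw : w ∈ V) (g : G) : g * w * g⁻¹ ∈ V := hV.normal.conj_mem w hw g
  let w := g⁻¹ * v * g
  have hwV : w ∈ V := by simpa [w] using conj_mem hv g⁻¹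
  have hwr : orderOf w = r := by simpa [w] using ((MulAut.conj g⁻¹).orderOf_eq v).trans hvr
  have hyw : Commute y w := by
    obtain ⟨n, hn⟩ := mem_zpowers_iff.1 hg
    rw [← Commute.conj_iff g, ← hn]
    simpa [w, mul_assoc] using hxv.zpow_left n
  have hyaw : Commute (a * y * a⁻¹) w := by
    have ha2 : a * a = a⁻¹ :=
      eq_inv_of_mul_eq_one_right (by rw [← mul_assoc, ← pow_three', ← ha, pow_orderOf_eq_one])
    have hcomm := commute_conj (conj_mem hwV a) (commute_conj hwV hyw)
    rw [show a * (a * w * a⁻¹) * a⁻¹ = a * a * w * (a * a)⁻¹ by group, ha2, inv_inv] at hcomm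
    rw [← Commute.conj_iff a⁻¹]
    simpa [mul_assoc] using hcomm
  have hcw := (hyw.pow_left 2).mul_left hyaw
  exact hno (.of_commute Nat.prime_three hr hr3.symm
    (orderOf_pow_orderOf_div (orderOf_pos _).ne' hc) hwr (hcw.pow_left _))

lemma compAdj_five_of_compAdj_three (hG : PseudoSolvable G) (hs : ¬ Group.IsSolvable G) {r : ℕ}
    (hr' : r ∉ ({2, 3, 5} : Set ℕ)) (h5 : PRankLEOne 5 G) (h15 : ¬ HasOrder G (3 * 5))
    (h : CompAdj G r 3) : CompAdj G r 5 := by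
  have hno : ¬ HasOrder G (3 * r) := mt .swap h.not_hasOrder
  have hr := h.1
  have hr5 : r ≠ 5 := fun h => hr' (by simp [h])
  have h3 := hG.pRankLEOne_of_not_hasOrder hs (by simp) hr hr' h.2.2.2.1 hno
  refine ⟨hr, Nat.prime_five, hr5, h.2.2.2.1, hG.dvd_natCard hs (by simp), ?_⟩
  intro hord
  obtain ⟨v, x, hv, hx, hvx⟩ := HasOrder.exists_commute hr.ne_zero (by norm_num) hord
  obtain ⟨N, hN, M, hvN, hM, hvM⟩ := exists_isMinimalNormal_quotient (P := fun N => v ∉ N)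
    (fun h => ne_one_of_orderOf_prime hr hv (mem_bot.1 h)) (not_not.2 (mem_top _))
  rw [not_not] at hvM
  have hvo : orderOf (QuotientGroup.mk' N v) = r :=
    orderOf_map_of_prime hr hv (mt (QuotientGroup.eq_one_iff _).1 hvN)
  have hrM : r ∣ Nat.card M := dvd_natCard_of_mem hvM hvo
  have hMs : Group.IsSolvable M := by
    by_contra hMs
    obtain ⟨T, hT⟩ := hM.exists_isA5Component (hG.quotient N) hMs
    exact hT.not_dvd_natCard hr hr' hrM
  have h3N : ¬ 3 ∣ Nat.card N := fun hd =>
    hno (h3.hasOrder_of_dvd_natCard_quotient Nat.prime_three hr h.2.2.1.symm N hd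
      (hvo ▸ orderOf_dvd_natCard _) (not_dvd_sub_one (by simp) hr hr'))
  have hs' : ¬ Group.IsSolvable (G ⧸ N) := not_isSolvable_quotient
    (by_contra fun hNs => h3N ((hG.subgroup N).dvd_natCard hNs (by simp))) hs
  have h5N : ¬ 5 ∣ Nat.card N := fun hd =>
    h15 (h5.hasOrder_of_dvd_natCard_quotient Nat.prime_five Nat.prime_three (by norm_num) N hd
      ((hG.quotient N).dvd_natCard hs' (by simp)) (by norm_num)).swap
  have hxo : orderOf (QuotientGroup.mk' N x) = 5 :=
    orderOf_map_of_prime Nat.prime_five hx fun h1 =>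
      h5N (dvd_natCard_of_mem ((QuotientGroup.eq_one_iff _).1 h1) hx)
  exact hno ((hG.quotient N).hasOrder_three_mul_of_commute hs' hr hr'
    (h3.quotient Nat.prime_three h3N) (h5.quotient Nat.prime_five h5N) (mt .of_quotient h15)
    (hM.isNormalElementaryAbelian hMs hr hrM) hxo hvM hvo
    (hvx.symm.map _)).of_quotient

end PseudoSolvable

end AdjacencyToThree

section NoElementOfOrderSix

open Subgroup

lemma exists_orderOf_pow_eq_of_pow_prime_pow_eq_one {G : Type*} [Group G] {g : G} {p k : ℕ}
    (hp : p.Prime) (h : g ^ p ^ k = 1) (hg : g ≠ 1) : ∃ m, orderOf (g ^ m) = p := by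
  obtain ⟨i, -, hi⟩ := (Nat.dvd_prime_pow hp).1 (orderOf_dvd_of_pow_eq_one h)
  have hi0 : i ≠ 0 := fun hi0 => hg (orderOf_eq_one_iff.1 (by rw [hi, hi0, pow_zero]))
  exact ⟨_, orderOf_pow_orderOf_div (hi ▸ pow_ne_zero i hp.ne_zero) (hi ▸ dvd_pow_self p hi0)⟩

namespace PseudoSolvable

variable {G : Type u} [Group G] [Finite G]

lemma not_compAdj_two (hG : PseudoSolvable G) (hs : ¬ Group.IsSolvable G) {r : ℕ}
    (hr' : r ∉ ({2, 3, 5} : Set ℕ)) (h6 : ¬ HasOrder G (2 * 3)) : ¬ CompAdj G r 2 := fun h =>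
  h6 (hG.hasOrder_two_mul_of_pRankLEOne hs
    (hG.pRankLEOne_of_not_hasOrder hs (by simp) h.1 hr' h.2.2.2.1 h.symm.not_hasOrder)
    (by simp) (by norm_num))

lemma not_compAdj_three (hG : PseudoSolvable G) (hs : ¬ Group.IsSolvable G) {r : ℕ}
    (hr' : r ∉ ({2, 3, 5} : Set ℕ)) (h6 : ¬ HasOrder G (2 * 3)) : ¬ CompAdj G r 3 := by
  intro h
  obtain ⟨S, hS, x, hx, ⟨k, hk⟩, -, s, hsS, hxs⟩ :=
    hG.exists_isPGroup_two_commutatorElement_notMem hs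
  have hx1 : x ≠ 1 := by
    rintro rfl
    exact hxs (by rw [commutatorElement_one_left]; exact one_mem _)
  obtain ⟨m, hm⟩ := exists_orderOf_pow_eq_of_pow_prime_pow_eq_one Nat.prime_three
    (hk ▸ pow_orderOf_eq_one x) hx1
  have hfree (y : G) (hy : y ∈ S) (hc : Commute (x ^ m) y) : y = 1 := by
    by_contra hy1
    obtain ⟨j, hj⟩ := hS ⟨y, hy⟩
    obtain ⟨l, hl⟩ := exists_orderOf_pow_eq_of_pow_prime_pow_eq_one Nat.prime_two
      (congrArg Subtype.val hj) hy1
    exact h6 (.of_commute Nat.prime_two Nat.prime_three (by norm_num) hl hm (hc.symm.pow_left l))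
  have hSR := hG.le_solvableRadical_of_fixedPointFree hs (by simp) h.1 hr' h.2.2.2.1
    h.symm.not_hasOrder
    (not_dvd_natCard_of_isPGroup Nat.prime_two h.1 (fun h2 => hr' (by simp [h2])) hS) hm
    (pow_mem hx m) hfree
  have hnormal : (solvableRadical G).Normal := inferInstance
  exact hxs (mul_mem (hnormal.conj_mem s (hSR hsS) x) (inv_mem (hSR hsS)))

end PseudoSolvable

end NoElementOfOrderSix

section CoprimeAction

open Subgroup
open scoped commutatorElement

section Commutators

variable {G : Type*} [Group G] {h u x : G}

lemma commutatorElement_pow_left_of_commute (hc : Commute h ⁅h, x⁆) (n : ℕ) :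
    ⁅h ^ n, x⁆ = ⁅h, x⁆ ^ n := by
  induction n with
  | zero => simp
  | succ n ih =>
    rw [pow_succ', commutatorElement_mul_left_eq_conj_mul, ih, (hc.pow_right n).eq,
      mul_inv_cancel_right, pow_succ]

lemma commute_commutatorElement (hu : Commute h u) (hux : Commute h (x⁻¹ * u * x)) :
    Commute ⁅h, x⁆ u := by
  have hconj : Commute (x * h⁻¹ * x⁻¹) u := by
    simpa [mul_assoc] using (Commute.conj_iff x).2 hux.inv_left
  rw [commutatorElement_def, mul_assoc h, mul_assoc h]
  exact hu.mul_left hconj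

lemma inv_mul_commutatorElement_mul_eq_inv (hc : Commute h (x ^ 2)) :
    x⁻¹ * ⁅h, x⁆ * x = ⁅h, x⁆⁻¹ := by
  calc x⁻¹ * ⁅h, x⁆ * x = x⁻¹ * (h * x ^ 2) * x⁻¹ * h⁻¹ := by
        rw [commutatorElement_def]
        group
    _ = ⁅h, x⁆⁻¹ := by
        rw [hc.eq, commutatorElement_inv, commutatorElement_def]
        group

end Commutators

variable {G : Type*} [Group G]

lemma commutatorElement_mem_of_mem_normalizer {S : Subgroup G} {h s : G}
    (hS : h ∈ normalizer (S : Set G)) (hs : s ∈ S) : ⁅h, s⁆ ∈ S :=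
  mul_mem ((mem_normalizer_iff.1 hS s).1 hs) (inv_mem hs)

lemma commute_of_commute_commutatorElement {p n : ℕ} (hpn : p.Coprime n) {S : Subgroup G}
    (hSp : IsPGroup p S) {h s : G} (hS : h ∈ normalizer (S : Set G)) (hn : h ^ n = 1)
    (hs : s ∈ S) (hc : Commute h ⁅h, s⁆) : Commute h s := by
  obtain ⟨k, hk⟩ := hSp ⟨⁅h, s⁆, commutatorElement_mem_of_mem_normalizer hS hs⟩
  have hgcd : ⁅h, s⁆ ^ (p ^ k).gcd n = 1 := pow_gcd_eq_one.2
    ⟨congrArg Subtype.val hk,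
      by rw [← commutatorElement_pow_left_of_commute hc, hn, commutatorElement_one_left]⟩
  rwa [(hpn.pow_left k).gcd_eq_one, pow_one, commutatorElement_eq_one_iff_commute] at hgcd

lemma four_dvd_orderOf {k : ℕ} {g : G} (hk : g ^ 2 ^ k = 1) (hg : g ^ 2 ≠ 1) :
    4 ∣ orderOf g := by
  obtain ⟨i, -, hi⟩ := (Nat.dvd_prime_pow Nat.prime_two).1 (orderOf_dvd_of_pow_eq_one hk)
  have h2 : 2 ≤ i := by
    by_contra! h2
    refine hg (orderOf_dvd_iff_pow_eq_one.1 (hi ▸ ?_))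
    simpa using pow_dvd_pow 2 (Nat.le_of_lt_succ h2)
  exact hi ▸ pow_dvd_pow 2 h2

lemma PRankLEOne.eq_of_commute_of_orderOf_eq_two (hr : PRankLEOne 2 G) {x y : G}
    (hx : orderOf x = 2) (hy : orderOf y = 2) (hxy : Commute x y) : x = y :=
  eq_of_mem_zpowers_of_orderOf_eq_two hx hy (hr y x hy hx hxy.symm)

lemma PRankLEOne.mem_zpowers_of_orderOf_eq_four (hr : PRankLEOne 2 G) {u w : G}
    (hu : orderOf u = 4) (hw : orderOf w = 4) (huw : Commute u w) : w ∈ zpowers u := by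
  have orderOf_sq {g : G} (hg : orderOf g = 4) : orderOf (g ^ 2) = 2 := by
    rw [orderOf_pow_of_dvd two_ne_zero (hg ▸ by norm_num), hg]
  have hsq : w ^ 2 = u ^ 2 :=
    hr.eq_of_commute_of_orderOf_eq_two (orderOf_sq hw) (orderOf_sq hu) (huw.symm.pow_pow 2 2)
  by_cases h1 : w * u⁻¹ = 1
  · exact mul_inv_eq_one.1 h1 ▸ mem_zpowers u
  have h2 : (w * u⁻¹) ^ 2 = 1 := by rw [huw.symm.inv_right.mul_pow, hsq, inv_pow, mul_inv_cancel]
  have heq : w * u⁻¹ = u ^ 2 := hr.eq_of_commute_of_orderOf_eq_two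
    (orderOf_eq_of_prime Nat.prime_two h2 h1) (orderOf_sq hu)
    ((huw.symm.mul_left (Commute.refl u).inv_left).pow_right 2)
  rw [mul_inv_eq_iff_eq_mul.1 heq]
  exact mul_mem (pow_mem (mem_zpowers u) 2) (mem_zpowers u)

lemma PRankLEOne.commute_of_commute_sq (hr : PRankLEOne 2 G) {n : ℕ} (hn2 : Nat.Coprime 2 n)
    {S : Subgroup G} (hS2 : IsPGroup 2 S) {h u : G} (hS : h ∈ normalizer (S : Set G))
    (hn : h ^ n = 1) (hu : orderOf u = 4) (hhu : Commute h u) (huS : ∀ s ∈ S, Commute u s)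
    {x : G} (hx : x ∈ S) (hx2 : Commute h (x ^ 2)) : Commute h x := by
  have hm := commutatorElement_mem_of_mem_normalizer hS hx
  refine commute_of_commute_commutatorElement hn2 hS2 hS hn hx ?_
  obtain ⟨k, hk⟩ := hS2 ⟨⁅h, x⁆, hm⟩
  -- `x` inverts `⁅h, x⁆` but centralizes `u`, whose powers are the only elements of order 4
  -- commuting with it.
  have hm2 : ⁅h, x⁆ ^ 2 = 1 := by
    by_contra hm2
    replace hk : ⁅h, x⁆ ^ 2 ^ k = 1 := congrArg Subtype.val hk
    have hw := orderOf_pow_orderOf_div (isOfFinOrder_iff_pow_eq_one.2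
      ⟨2 ^ k, by positivity, hk⟩).orderOf_pos.ne' (four_dvd_orderOf hk hm2)
    set i := orderOf ⁅h, x⁆ / 4
    obtain ⟨j, hj⟩ := hr.mem_zpowers_of_orderOf_eq_four hu hw ((huS _ hm).pow_right i)
    have hxw : Commute (⁅h, x⁆ ^ i) x := hj ▸ (huS x hx).zpow_left j
    have hinv : ⁅h, x⁆ ^ i = (⁅h, x⁆ ^ i)⁻¹ := calc
      ⁅h, x⁆ ^ i = x⁻¹ * ⁅h, x⁆ ^ i * x := by rw [mul_assoc, hxw.eq, inv_mul_cancel_left]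
      _ = (x⁻¹ * ⁅h, x⁆ * x) ^ i := by simpa using (conj_pow (a := x⁻¹) (i := i)).symm
      _ = (⁅h, x⁆ ^ i)⁻¹ := by rw [inv_mul_commutatorElement_mul_eq_inv hx2, inv_pow]
    have hw2 : (⁅h, x⁆ ^ i) ^ 2 = 1 := by rw [sq, mul_eq_one_iff_eq_inv, ← hinv]
    exact absurd (hw ▸ orderOf_dvd_of_pow_eq_one hw2) (by norm_num)
  by_cases hm1 : ⁅h, x⁆ = 1
  · rw [hm1]
    exact Commute.one_right h
  have hu2 : orderOf (u ^ 2) = 2 := by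
    rw [orderOf_pow_of_dvd two_ne_zero (hu ▸ by norm_num), hu]
  rw [hr.eq_of_commute_of_orderOf_eq_two (orderOf_eq_of_prime Nat.prime_two hm2 hm1) hu2
    ((huS _ hm).symm.pow_right 2)]
  exact hhu.pow_right 2

lemma PRankLEOne.commute_of_central_orderOf_eq_four (hr : PRankLEOne 2 G) {n : ℕ}
    (hn2 : Nat.Coprime 2 n) {S : Subgroup G} (hS2 : IsPGroup 2 S) {h u : G}
    (hS : h ∈ normalizer (S : Set G)) (hn : h ^ n = 1) (hu : orderOf u = 4)
    (hhu : Commute h u) (huS : ∀ s ∈ S, Commute u s) {x : G} (hx : x ∈ S) : Commute h x := by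
  obtain ⟨k, hk⟩ := hS2 ⟨x, hx⟩
  replace hk : x ^ 2 ^ k = 1 := congrArg Subtype.val hk
  induction k generalizing x with
  | zero =>
    rw [pow_zero, pow_one] at hk
    exact hk ▸ Commute.one_right h
  | succ k ih =>
    exact hr.commute_of_commute_sq hn2 hS2 hS hn hu hhu huS hx
      (ih (pow_mem hx 2) (by rw [← pow_mul, ← pow_succ', hk]))

lemma PRankLEOne.sq_eq_one_of_commute [Finite G] (hr : PRankLEOne 2 G) {n : ℕ}
    (hn2 : Nat.Coprime 2 n) {S : Subgroup G} (hS2 : IsPGroup 2 S) {h : G}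
    (hS : h ∈ normalizer (S : Set G)) (hn : h ^ n = 1) (hne : ∃ x ∈ S, ¬ Commute h x) {s : G}
    (hs : s ∈ S) (hhs : Commute h s) : s ^ 2 = 1 := by
  by_contra hs2
  obtain ⟨k, hk⟩ := hS2 ⟨s, hs⟩
  have hu := orderOf_pow_orderOf_div (n := 4) (orderOf_pos s).ne'
    (four_dvd_orderOf (congrArg Subtype.val hk) hs2)
  have hhu := hhs.pow_right (orderOf s / 4)
  have huS := pow_mem hs (orderOf s / 4)
  set u := s ^ (orderOf s / 4)
  have hhC : h ∈ normalizer ((S ⊓ centralizer {u} : Subgroup G) : Set G) :=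
    inf_normalizer_le_normalizer_inf
      ⟨hS, le_normalizer (mem_centralizer_singleton_iff.2 hhu)⟩
  have hC {x : G} (hx : x ∈ S) (hxu : Commute u x) : Commute h x :=
    hr.commute_of_central_orderOf_eq_four hn2 (hS2.to_le inf_le_left) hhC hn hu hhu
      (fun y hy => (mem_centralizer_singleton_iff.1 hy.2).symm)
      ⟨hx, mem_centralizer_singleton_iff.2 hxu.symm⟩
  have hB : (centralizer {h}).subgroupOf S < ⊤ := by
    obtain ⟨x, hx, hhx⟩ := hne
    exact lt_top_iff_ne_top.2 fun htop =>
      hhx (mem_centralizer_singleton_iff.1 (subgroupOf_eq_top.1 htop hx)).symm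
  have : Group.IsNilpotent S := hS2.isNilpotent
  obtain ⟨x, hx, hxB⟩ := SetLike.exists_of_lt (Group.normalizerCondition_of_isNilpotent _ hB)
  have hxu : Commute h ((x : G)⁻¹ * u * x) := by
    have hmem := (mem_normalizer_iff.1 (inv_mem hx) ⟨u, huS⟩).1
      (mem_centralizer_singleton_iff.2 hhu.symm)
    simpa [Commute, SemiconjBy] using (mem_centralizer_singleton_iff.1 hmem).symm
  have hcm : Commute h ⁅h, (x : G)⁆ := hC (commutatorElement_mem_of_mem_normalizer hS x.2)
    (commute_commutatorElement hhu hxu).symm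
  exact hxB (mem_centralizer_singleton_iff.2
    (commute_of_commute_commutatorElement hn2 hS2 hS hn x.2 hcm).symm)

end CoprimeAction

section CentralInvolution

open Subgroup
open scoped commutatorElement

variable {G : Type u} [Group G]

namespace PseudoSolvable

lemma of_sup_eq_top (hG : PseudoSolvable G) {C R : Subgroup G} [R.Normal]
    (hR : Group.IsSolvable R) (h : C ⊔ R = ⊤) : PseudoSolvable C := by
  let f := (QuotientGroup.mk' R).comp C.subtype
  have hker : Group.IsSolvable f.ker := Group.isSolvable_of_isSolvable_injective
    (f := (C.subtype.comp f.ker.subtype).codRestrict R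
      fun x => (QuotientGroup.eq_one_iff _).1 x.2)
    fun _ _ hab => Subtype.ext (Subtype.ext (congrArg (fun r : R => (r : G)) hab))
  exact .of_extension (.of_isSolvable hker) ((hG.quotient R).of_mulEquiv
    (QuotientGroup.quotientKerEquivOfSurjective f (surjective_mk'_comp_subtype h)).symm)

end PseudoSolvable

lemma not_isSolvable_of_sup_eq_top {C R : Subgroup G} [R.Normal] (hR : Group.IsSolvable R)
    (h : C ⊔ R = ⊤) (hs : ¬ Group.IsSolvable G) : ¬ Group.IsSolvable C := fun _ =>
  hs (isSolvable_of_normal_of_quotient R hR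
    (Group.isSolvable_of_surjective (surjective_mk'_comp_subtype h)))

lemma normal_zpowers_of_mem_center {t : G} (ht : t ∈ center G) : (zpowers t).Normal := by
  refine ⟨fun z hz g => ?_⟩
  rwa [mem_center_iff.1 (zpowers_le.2 ht hz), mul_inv_cancel_right]

lemma PRankLEOne.mem_zpowers_of_commute_mk [Finite G] (hr : PRankLEOne 2 G) {t : G}
    (ht : orderOf t = 2) (htc : t ∈ center G) [(zpowers t).Normal] {n : ℕ}
    (hn2 : Nat.Coprime 2 n) {S : Subgroup G} (hS2 : IsPGroup 2 S) {h : G}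
    (hS : h ∈ normalizer (S : Set G)) (hn : h ^ n = 1) (hne : ∃ x ∈ S, ¬ Commute h x) {s : G}
    (hs : s ∈ S) (hc : Commute (h : G ⧸ zpowers t) s) : s ∈ zpowers t := by
  obtain ⟨i, hi⟩ : ⁅h, s⁆ ∈ zpowers t :=
    (QuotientGroup.eq_one_iff _).1 (commutatorElement_eq_one_iff_commute.2 hc)
  have hhs : Commute h s := commute_of_commute_commutatorElement hn2 hS2 hS hn hs
    (hi ▸ Commute.zpow_right (mem_center_iff.1 htc h) i)
  by_cases hs1 : s = 1
  · exact hs1 ▸ one_mem _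
  have hs2 := orderOf_eq_of_prime Nat.prime_two
    (hr.sq_eq_one_of_commute hn2 hS2 hS hn hne hs hhs) hs1
  exact hr t s ht hs2 (mem_center_iff.1 htc s).symm

namespace PseudoSolvable

variable [Finite G]

lemma exists_isPGroup_two_orderOf_eq_three (hG : PseudoSolvable G) (hs : ¬ Group.IsSolvable G)
    (h3 : ¬ 3 ∣ Nat.card (solvableRadical G)) : ∃ S : Subgroup G, IsPGroup 2 S ∧
      ∃ h ∈ normalizer (S : Set G), orderOf h = 3 ∧ ∃ s ∈ S, ⁅h, s⁆ ∉ solvableRadical G := by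
  obtain ⟨S, hS2, h, hS, ⟨k, hk⟩, hhR, s, hsS, hsR⟩ :=
    hG.exists_isPGroup_two_commutatorElement_notMem hs
  refine ⟨S, hS2, h, hS, orderOf_eq_of_prime Nat.prime_three ?_ ?_, s, hsS, hsR⟩
  · by_contra hne
    obtain ⟨m, hm⟩ := exists_orderOf_pow_eq_of_pow_prime_pow_eq_one (k := k) Nat.prime_three
      (by rw [← pow_mul, mul_comm, pow_mul, ← hk, pow_orderOf_eq_one, one_pow]) hne
    exact h3 (dvd_natCard_of_mem (pow_mem hhR m) hm)
  · rintro rfl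
    exact hsR (by rw [commutatorElement_one_left]; exact one_mem _)

lemma hasOrder_three_mul_of_central (hG : PseudoSolvable G) (hs : ¬ Group.IsSolvable G)
    (h2 : PRankLEOne 2 G) (h3 : PRankLEOne 3 G) (h15 : ¬ HasOrder G (3 * 5)) {r : ℕ}
    (hr : r.Prime) (hr' : r ∉ ({2, 3, 5} : Set ℕ)) (hd : r ∣ Nat.card G) {t : G}
    (ht : orderOf t = 2) (htc : t ∈ center G) : HasOrder G (3 * r) := by
  by_contra hno
  have hr2 : r ≠ 2 := fun h => hr' (by simp [h])
  obtain ⟨S, hS2, h, hS, hh, s, hsS, hsR⟩ := hG.exists_isPGroup_two_orderOf_eq_three hs fun hd =>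
    h15 (hG.hasOrder_of_dvd_natCard_solvableRadical hs Nat.prime_three (by simp) (by simp) h3 hd)
  have hZn := normal_zpowers_of_mem_center htc
  have hZs : Group.IsSolvable (zpowers t) := inferInstance
  have hmem {x : G} (hx : x ∈ S) (hc : Commute (h : G ⧸ zpowers t) x) : x ∈ zpowers t :=
    h2.mem_zpowers_of_commute_mk ht htc (n := 3) (by norm_num) hS2 hS
      (hh ▸ pow_orderOf_eq_one h) ⟨s, hsS, fun hc => hsR
        (by rw [commutatorElement_eq_one_iff_commute.2 hc]; exact one_mem _)⟩ hx hc
  have hhZ : h ∉ zpowers t := fun hh' => by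
    have := dvd_natCard_of_mem hh' hh
    rw [Nat.card_zpowers, ht] at this
    norm_num at this
  let π := QuotientGroup.mk' (zpowers t)
  have hle : S.map π ≤ solvableRadical (G ⧸ zpowers t) := by
    refine (hG.quotient _).le_solvableRadical_of_fixedPointFree (not_isSolvable_quotient hZs hs)
      (by simp) hr hr' (dvd_natCard_quotient hr _ hd ?_) (mt .of_quotient hno)
      (not_dvd_natCard_of_isPGroup Nat.prime_two hr hr2 (hS2.map π))
      (orderOf_map_of_prime Nat.prime_three hh (mt (QuotientGroup.eq_one_iff h).1 hhZ))
      (le_normalizer_map π (mem_map_of_mem π hS)) ?_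
    · rw [Nat.card_zpowers, ht]
      exact mt (Nat.prime_dvd_prime_iff_eq hr Nat.prime_two).1 hr2
    · rintro _ ⟨x, hx, rfl⟩ hc
      exact (QuotientGroup.eq_one_iff x).2 (hmem hx hc)
  have hSR : S ≤ solvableRadical G := (map_le_iff_le_comap.1 hle).trans
    (le_solvableRadical inferInstance (isSolvable_comap_mk' _ hZs _ inferInstance))
  exact hsR (hSR (commutatorElement_mem_of_mem_normalizer hS hsS))

lemma compAdj_two_of_compAdj_three (hG : PseudoSolvable G) (hs : ¬ Group.IsSolvable G) {r : ℕ}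
    (hr' : r ∉ ({2, 3, 5} : Set ℕ)) (h2 : PRankLEOne 2 G) (h15 : ¬ HasOrder G (3 * 5))
    (h : CompAdj G r 3) : CompAdj G r 2 := by
  have hno : ¬ HasOrder G (3 * r) := h.symm.not_hasOrder
  have hr := h.1
  have h3 := hG.pRankLEOne_of_not_hasOrder hs (by simp) hr hr' h.2.2.2.1 hno
  refine ⟨hr, Nat.prime_two, fun h => hr' (by simp [h]), h.2.2.2.1,
    hG.dvd_natCard hs (by simp), fun hord => ?_⟩
  obtain ⟨y, t, hy, ht, hyt⟩ := HasOrder.exists_commute hr.ne_zero two_ne_zero hord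
  have htop := hG.centralizer_sup_solvableRadical_eq_top hs h2 ht
  refine hno (((hG.of_sup_eq_top inferInstance htop).hasOrder_three_mul_of_central
    (not_isSolvable_of_sup_eq_top inferInstance htop hs) (h2.subgroup Nat.prime_two _)
    (h3.subgroup Nat.prime_three _) (mt .of_subgroup h15) hr hr'
    (dvd_natCard_of_mem (mem_centralizer_singleton_iff.2 hyt) hy)
    (t := ⟨t, mem_centralizer_singleton_iff.2 rfl⟩) ?_ ?_).of_subgroup)
  · rw [orderOf_mk, ht]
  · exact mem_center_iff.2 fun g => Subtype.ext (mem_centralizer_singleton_iff.1 g.2)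

end PseudoSolvable

end CentralInvolution

section Categories

variable {G : Type u} [Group G]

/-- The complement of the prime graph has a triangle `{p, 3, 5}` with `p ∉ {2, 3, 5}`: the
triangle that categories (3) and (4) share. -/
def HasOuterTriangle (G : Type*) [Group G] : Prop :=
  ∃ p : ℕ, p ∉ ({2, 3, 5} : Set ℕ) ∧ CompAdj G p 3 ∧ CompAdj G p 5 ∧ CompAdj G 3 5

lemma hasOuterTriangle_iff : HasOuterTriangle G ↔
    ∃ p : ℕ, p.Prime ∧ p ∉ ({2, 3, 5} : Set ℕ) ∧ p ∣ Nat.card G ∧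
      3 ∣ Nat.card G ∧ 5 ∣ Nat.card G ∧
      (¬ ∃ g : G, orderOf g = 3 * p) ∧ (¬ ∃ g : G, orderOf g = 5 * p) ∧
      (¬ ∃ g : G, orderOf g = 15) := by
  constructor
  · rintro ⟨p, hp, h3, h5, h35⟩
    exact ⟨p, h3.1, hp, h3.2.2.2.1, h35.2.2.2.1, h35.2.2.2.2.1, h3.symm.not_hasOrder,
      h5.symm.not_hasOrder, h35.not_hasOrder⟩
  · rintro ⟨p, hp, hp', dp, d3, d5, n3, n5, n15⟩
    have ne_of_mem {q : ℕ} (hq : q ∈ ({2, 3, 5} : Set ℕ)) : q ≠ p := fun h => hp' (h ▸ hq)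
    exact ⟨p, hp', CompAdj.symm ⟨Nat.prime_three, hp, ne_of_mem (by simp), d3, dp, n3⟩,
      CompAdj.symm ⟨Nat.prime_five, hp, ne_of_mem (by simp), d5, dp, n5⟩,
      ⟨Nat.prime_three, Nat.prime_five, by norm_num, d3, d5, n15⟩⟩

lemma Cat2.triangle (h : Cat2 G) : CompAdj G 2 3 ∧ CompAdj G 2 5 ∧ CompAdj G 3 5 := by
  obtain ⟨-, d2, d3, d5, n6, n10, n15, -⟩ := h
  exact ⟨⟨Nat.prime_two, Nat.prime_three, by norm_num, d2, d3, n6⟩,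
    ⟨Nat.prime_two, Nat.prime_five, by norm_num, d2, d5, n10⟩,
    ⟨Nat.prime_three, Nat.prime_five, by norm_num, d3, d5, n15⟩⟩

lemma Cat3.hasOuterTriangle (h : Cat3 G) : HasOuterTriangle G := hasOuterTriangle_iff.2 h.2.1

lemma Cat4.hasOuterTriangle (h : Cat4 G) : HasOuterTriangle G := hasOuterTriangle_iff.2 h.2.1

lemma Cat2.not_cat1 (h : Cat2 G) : ¬ Cat1 G := fun h1 => h1.2 ⟨2, 3, 5, h.triangle⟩

lemma HasOuterTriangle.not_cat1 (h : HasOuterTriangle G) : ¬ Cat1 G := fun h1 =>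
  let ⟨p, _, hp⟩ := h
  h1.2 ⟨p, 3, 5, hp⟩

lemma HasOuterTriangle.not_cat2 (h : HasOuterTriangle G) : ¬ Cat2 G := fun h2 =>
  let ⟨p, hp', h3, _⟩ := h
  (h2.2.2.2.2.2.2.2 p h3.1 h3.2.2.2.1 hp').2 h3

lemma Cat3.not_cat4 (h : Cat3 G) : ¬ Cat4 G := by
  intro h4
  obtain ⟨p, hp', h3, -, -⟩ := h.hasOuterTriangle
  have hp2 : CompAdj G p 2 := by
    rcases h.2.2 p h3.1 h3.2.2.2.1 hp' with h | h | h | h | h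
    exacts [absurd h3 h.1, h.2.2, absurd h3 h.1, absurd h3 h.1, absurd h3 h.1]
  rcases h4.2.2 p h3.1 h3.2.2.2.1 hp' with h | h | h <;> exact h.2.2 hp2

lemma exists_compAdj_three_five_of_mem {p q r : ℕ} (hpq : CompAdj G p q) (hpr : CompAdj G p r)
    (hqr : CompAdj G q r) (h3 : 3 ∈ ({p, q, r} : Set ℕ)) (h5 : 5 ∈ ({p, q, r} : Set ℕ)) :
    ∃ x, CompAdj G x 3 ∧ CompAdj G x 5 ∧ CompAdj G 3 5 := by
  rcases h3 with rfl | rfl | rfl <;> rcases h5 with h | h | h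
  · exact absurd h (by norm_num)
  · subst h
    exact ⟨r, hpr.symm, hqr.symm, hpq⟩
  · subst h
    exact ⟨q, hpq.symm, hqr, hpr⟩
  · subst h
    exact ⟨r, hqr.symm, hpr.symm, hpq.symm⟩
  · exact absurd h (by norm_num)
  · subst h
    exact ⟨p, hpq, hpr, hqr⟩
  · subst h
    exact ⟨q, hqr, hpq.symm, hpr.symm⟩
  · subst h
    exact ⟨p, hpr, hpq, hqr.symm⟩
  · exact absurd h (by norm_num)

namespace PseudoSolvable

variable [Finite G]

lemma cat2_of_triangle (hG : PseudoSolvable G) (hs : ¬ Group.IsSolvable G)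
    (h23 : CompAdj G 2 3) (h25 : CompAdj G 2 5) (h35 : CompAdj G 3 5) : Cat2 G :=
  ⟨hG.compColorable3, h23.2.2.2.1, h35.2.2.2.1, h35.2.2.2.2.1, h23.not_hasOrder,
    h25.not_hasOrder, h35.not_hasOrder, fun _ _ _ hr =>
      ⟨hG.not_compAdj_two hs hr h23.not_hasOrder, hG.not_compAdj_three hs hr h23.not_hasOrder⟩⟩

lemma compAdj_five_of_hasOuterTriangle (hG : PseudoSolvable G) (hs : ¬ Group.IsSolvable G)
    (hT : HasOuterTriangle G) {r : ℕ} (hr : r ∉ ({2, 3, 5} : Set ℕ)) (h : CompAdj G r 3) :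
    CompAdj G r 5 := by
  obtain ⟨p, hp, -, hp5, h35⟩ := hT
  exact hG.compAdj_five_of_compAdj_three hs hr (hG.pRankLEOne_of_not_hasOrder hs (by simp) hp5.1
    hp hp5.2.2.2.1 hp5.symm.not_hasOrder) h35.not_hasOrder h

lemma cat3_of_hasOuterTriangle (hG : PseudoSolvable G) (hs : ¬ Group.IsSolvable G)
    (hT : HasOuterTriangle G) {q : ℕ} (hq : q ∉ ({2, 3, 5} : Set ℕ)) (hq2 : CompAdj G q 2) :
    Cat3 G := by
  refine ⟨hG.compColorable3, hasOuterTriangle_iff.1 hT, fun r _ _ hr => ?_⟩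
  have h2 := hG.pRankLEOne_of_not_hasOrder hs (by simp) hq2.1 hq hq2.2.2.2.1
    hq2.symm.not_hasOrder
  obtain ⟨_, -, -, -, h35⟩ := id hT
  have h53 : CompAdj G r 3 → CompAdj G r 5 := hG.compAdj_five_of_hasOuterTriangle hs hT hr
  have h23 : CompAdj G r 3 → CompAdj G r 2 :=
    hG.compAdj_two_of_compAdj_three hs hr h2 h35.not_hasOrder
  clear hT
  tauto

lemma cat4_of_hasOuterTriangle (hG : PseudoSolvable G) (hs : ¬ Group.IsSolvable G)
    (hT : HasOuterTriangle G) (h2 : ∀ q ∉ ({2, 3, 5} : Set ℕ), ¬ CompAdj G q 2) : Cat4 G := by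
  refine ⟨hG.compColorable3, hasOuterTriangle_iff.1 hT, fun r _ _ hr => ?_⟩
  have h53 : CompAdj G r 3 → CompAdj G r 5 := hG.compAdj_five_of_hasOuterTriangle hs hT hr
  have h2r := h2 r hr
  clear hT h2
  tauto

lemma cat2_or_cat3_or_cat4_of_triangle (hG : PseudoSolvable G) {p q r : ℕ}
    (hpq : CompAdj G p q) (hpr : CompAdj G p r) (hqr : CompAdj G q r) :
    Cat2 G ∨ Cat3 G ∨ Cat4 G := by
  obtain ⟨hs, h3, h5⟩ := hG.not_isSolvable_and_three_five_mem_of_triangle hpq hpr hqr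
  obtain ⟨x, hx3, hx5, h35⟩ := exists_compAdj_three_five_of_mem hpq hpr hqr h3 h5
  obtain rfl | hx2 := eq_or_ne x 2
  · exact .inl (hG.cat2_of_triangle hs hx3 hx5 h35)
  have hT : HasOuterTriangle G := ⟨x, by simp [hx2, hx3.2.2.1, hx5.2.2.1], hx3, hx5, h35⟩
  by_cases h2 : ∃ q ∉ ({2, 3, 5} : Set ℕ), CompAdj G q 2
  · obtain ⟨q, hq, hq2⟩ := h2
    exact .inr (.inl (hG.cat3_of_hasOuterTriangle hs hT hq hq2))
  · push Not at h2
    exact .inr (.inr (hG.cat4_of_hasOuterTriangle hs hT h2))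

lemma cat1_or_cat2_or_cat3_or_cat4 (hG : PseudoSolvable G) :
    Cat1 G ∨ Cat2 G ∨ Cat3 G ∨ Cat4 G := by
  by_cases h : ∃ p q r : ℕ, CompAdj G p q ∧ CompAdj G p r ∧ CompAdj G q r
  · obtain ⟨p, q, r, hpq, hpr, hqr⟩ := h
    exact .inr (hG.cat2_or_cat3_or_cat4_of_triangle hpq hpr hqr)
  · exact .inl ⟨hG.compColorable3, h⟩

end PseudoSolvable

end Categories

/-- The prime graph of a finite pseudo-solvable group falls into exactly one of the
four categories of the classification. -/
theorem pseudo_solvable_four_categories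
    (G : Type*) [Group G] [Finite G] (hG : IsPseudoSolvable G) :
    (Cat1 G ∧ ¬ Cat2 G ∧ ¬ Cat3 G ∧ ¬ Cat4 G) ∨
    (¬ Cat1 G ∧ Cat2 G ∧ ¬ Cat3 G ∧ ¬ Cat4 G) ∨
    (¬ Cat1 G ∧ ¬ Cat2 G ∧ Cat3 G ∧ ¬ Cat4 G) ∨
    (¬ Cat1 G ∧ ¬ Cat2 G ∧ ¬ Cat3 G ∧ Cat4 G) := by
  rcases hG.pseudoSolvable.cat1_or_cat2_or_cat3_or_cat4 with h1 | h2 | h3 | h4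
  · exact .inl ⟨h1, fun h2 => h2.not_cat1 h1, fun h3 => h3.hasOuterTriangle.not_cat1 h1,
      fun h4 => h4.hasOuterTriangle.not_cat1 h1⟩
  · exact .inr (.inl ⟨h2.not_cat1, h2, fun h3 => h3.hasOuterTriangle.not_cat2 h2,
      fun h4 => h4.hasOuterTriangle.not_cat2 h2⟩)
  · exact .inr (.inr (.inl ⟨h3.hasOuterTriangle.not_cat1, h3.hasOuterTriangle.not_cat2, h3,
      h3.not_cat4⟩))
  · exact .inr (.inr (.inr ⟨h4.hasOuterTriangle.not_cat1, h4.hasOuterTriangle.not_cat2,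
      fun h3 => h3.not_cat4 h4, h4⟩))
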